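/- Let 0<r<1, 1<p<∞, α>0 and β∈ℝ, and let p' satisfy 1/p+1/p'=1. Then for every integer n ≥ n₀(α,r,p) one has E_n(C^{α,r}_{β,p})_C = e^{-α n^r} n^{(1-r)/p} [ (‖cos t‖_{p'} / (π^{1+1/p'} (αr)^{1/p})) · (∫_0^∞ dt/(t²+1)^{p'/2})^{1/p'} + γ_n · ( (1/(p'−1)) (αr)^{(p'−1)/p} n^{-(1-r)(p'−1)} + p^{1/p'} (αr)^{-(1+1/p)} n^{-r} + n^{-(1-r)/p} ) ], where the quantity γ_n = γ_n(α,r,β,p) satisfies |γ_n| ≤ (14π)². -/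

import Mathlib

open MeasureTheory Real Filter
open scoped ENNReal

/-- The generalized Poisson kernel `P_{α,r,β}(t) = Σ_{k=1}^∞ e^{-α k^r} cos(kt − βπ/2)`. -/
noncomputable def genPoissonKernel (α r β : ℝ) (t : ℝ) : ℝ :=
  ∑' k : ℕ, Real.exp (-α * ((k : ℝ) + 1) ^ r) * Real.cos (((k : ℝ) + 1) * t - β * π / 2)

/-- Fourier cosine coefficient `a_k = (1/π)∫_{-π}^{π} f(t) cos(kt) dt`. -/
noncomputable def fourierCoefA (f : ℝ → ℝ) (k : ℕ) : ℝ :=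
  (1 / π) * ∫ t in (-π)..π, f t * Real.cos (k * t)

/-- Fourier sine coefficient `b_k = (1/π)∫_{-π}^{π} f(t) sin(kt) dt`. -/
noncomputable def fourierCoefB (f : ℝ → ℝ) (k : ℕ) : ℝ :=
  (1 / π) * ∫ t in (-π)..π, f t * Real.sin (k * t)

/-- Partial Fourier sum of order `m` of `f`. -/
noncomputable def fourierSum (m : ℕ) (f : ℝ → ℝ) (x : ℝ) : ℝ :=
  fourierCoefA f 0 / 2 +
    ∑ k ∈ Finset.Icc 1 m, (fourierCoefA f k * Real.cos (k * x) + fourierCoefB f k * Real.sin (k * x))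

/-- The class `C^{α,r}_{β,p}` of generalized Poisson integrals. -/
def poissonClass (α r β : ℝ) (p : ℝ≥0∞) : Set (ℝ → ℝ) :=
  {f | (∀ x, f (x + 2 * π) = f x) ∧ ∃ a₀ : ℝ, ∃ φ : ℝ → ℝ,
    (∀ x, φ (x + 2 * π) = φ x) ∧
    eLpNorm φ p (volume.restrict (Set.Ioc (0 : ℝ) (2 * π))) ≤ 1 ∧
    (∫ t in (0 : ℝ)..(2 * π), φ t) = 0 ∧
    ∀ x, f x = a₀ / 2 + (1 / π) * ∫ t in (-π)..π, genPoissonKernel α r β (x - t) * φ t}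

/-- `E_n(C^{α,r}_{β,p})_C`: uniform deviation of Fourier sums of order `n-1` on the class. -/
noncomputable def EnC (α r β : ℝ) (p : ℝ≥0∞) (n : ℕ) : ℝ :=
  ⨆ f ∈ poissonClass α r β p, ⨆ x : ℝ, |f x - fourierSum (n - 1) f x|

/-- `‖cos‖_{L_{p'}}` over a period, real exponent. -/
noncomputable def cosNormR (s : ℝ) : ℝ :=
  (∫ t in (0 : ℝ)..(2 * π), |Real.cos t| ^ s) ^ (1 / s)

/-- `n₀(α,r,p)` for finite `1 < p < ∞`. -/
noncomputable def n₀fin (α r p : ℝ) : ℕ :=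
  sInf {n : ℕ | 0 < n ∧
    1 / (α * r) * (n : ℝ) ^ (-r) + α * r * p * (n : ℝ) ^ (-(1 - r)) ≤
      (1 / (3 * π) ^ 3) * (p - 1) / p}

/-!
For `f` in the class, `f - S_{n-1} f` is the convolution of `φ` with the tail of the kernel, so by
`L^p`-`L^{p'}` duality the deviation is `1 / π` times the `L^{p'}` norm of that tail. The condition
`∫ φ = 0` costs little: the tail is a carrier of frequency `n` times a slowly varying amplitude, so
translating it by `π / n` nearly changes its sign, and antisymmetrizing the extremal function
accordingly makes its mean zero.

Up to the factor `e^{-α n^r}` the tail is `Re (e^{i(nt - βπ/2)} Q t)` with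
`Q t = ∑ e^{-α ((n + k)^r - n^r)} e^{ikt}`. Replacing the exponent by its linearization `l k`,
`l = α r n^{r-1}`, turns `Q` into a geometric series, which differs from its singular part
`1 / (l - it)` by a bounded function; summation by parts shows that the error is of relative order
`1 / (l n)`. Shifting the phase of the carrier is a translation of `Q` by at most `π / n`, so the
norm of the tail is close to its average over all phases, which is the norm of `Q` times the
`L^{p'}` mean of `|cos|`. The norm of `1 / (l - it)` is computed by scaling.

Nothing in the class makes `φ` measurable. For a non-measurable `φ` the convolution is the junk
value `0` and `f` is constant, because the kernel vanishes only on a null set: its coefficients are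
completely monotone, so an Euler transform shows that it is analytic away from the multiples of
`2π`.
-/

/-! ### The `L^s` norm over a period -/

lemma neg_pi_le_pi : -π ≤ π := by linarith [pi_pos]

/-- The `L^s` norm of `F` over the period `[-π, π]`, as a real number; it is only used for
functions whose `s`-th power is integrable there. -/
noncomputable def periodNorm {E : Type*} [NormedAddCommGroup E] (s : ℝ) (F : ℝ → E) : ℝ :=
  (∫ t in (-π)..π, ‖F t‖ ^ s) ^ (1 / s)

section PeriodNorm

variable {E E' : Type*} [NormedAddCommGroup E] [NormedAddCommGroup E'] {s : ℝ}

lemma memLp_restrict_Ioc_of_continuous {F : ℝ → E} (hF : Continuous F) (p : ℝ≥0∞) (a b : ℝ) :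
    MemLp F p (volume.restrict (Set.Ioc a b)) := by
  obtain ⟨C, hC⟩ := (isCompact_Icc (a := a) (b := b)).exists_bound_of_continuousOn hF.continuousOn
  refine MemLp.of_bound ?_ C ?_
  · exact (hF.locallyIntegrable.integrableOn_isCompact isCompact_Icc).mono_set
      Set.Ioc_subset_Icc_self |>.aestronglyMeasurable
  · filter_upwards [ae_restrict_mem measurableSet_Ioc] with x hx
    exact hC x (Set.Ioc_subset_Icc_self hx)

lemma periodNorm_eq_lpNorm (hs : 0 < s) {F : ℝ → E}
    (hF : AEStronglyMeasurable F (volume.restrict (Set.Ioc (-π) π))) :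
    periodNorm s F = lpNorm F (ENNReal.ofReal s) (volume.restrict (Set.Ioc (-π) π)) := by
  rw [lpNorm_eq_integral_norm_rpow_toReal (by simpa using hs) ENNReal.ofReal_ne_top hF,
    ENNReal.toReal_ofReal hs.le, periodNorm, intervalIntegral.integral_of_le neg_pi_le_pi, one_div]

lemma integral_norm_rpow_nonneg (s : ℝ) (F : ℝ → E) : 0 ≤ ∫ t in (-π)..π, ‖F t‖ ^ s :=
  intervalIntegral.integral_nonneg neg_pi_le_pi fun _ _ => rpow_nonneg (norm_nonneg _) _

lemma periodNorm_nonneg (s : ℝ) (F : ℝ → E) : 0 ≤ periodNorm s F :=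
  rpow_nonneg (integral_norm_rpow_nonneg s F) _

lemma periodNorm_rpow (hs : s ≠ 0) (F : ℝ → E) :
    periodNorm s F ^ s = ∫ t in (-π)..π, ‖F t‖ ^ s := by
  rw [periodNorm, ← rpow_mul (integral_norm_rpow_nonneg s F), one_div_mul_cancel hs, rpow_one]

lemma periodNorm_add_le (hs : 1 ≤ s) {F G : ℝ → E} (hF : Continuous F) (hG : Continuous G) :
    periodNorm s (fun t => F t + G t) ≤ periodNorm s F + periodNorm s G := by
  have hs0 : 0 < s := by linarith
  rw [periodNorm_eq_lpNorm hs0 (hF.fun_add hG).aestronglyMeasurable,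
    periodNorm_eq_lpNorm hs0 hF.aestronglyMeasurable,
    periodNorm_eq_lpNorm hs0 hG.aestronglyMeasurable]
  exact lpNorm_add_le (memLp_restrict_Ioc_of_continuous hF _ _ _) (by simpa using hs)

lemma periodNorm_congr {F : ℝ → E} {G : ℝ → E'} (h : ∀ t, ‖F t‖ = ‖G t‖) :
    periodNorm s F = periodNorm s G := by
  simp_rw [periodNorm, h]

lemma abs_periodNorm_sub_le (hs : 1 ≤ s) {F G : ℝ → E} (hF : Continuous F) (hG : Continuous G) :
    |periodNorm s F - periodNorm s G| ≤ periodNorm s (fun t => F t - G t) := by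
  have hFG := periodNorm_add_le hs (hF.fun_sub hG) hG
  have hGF := periodNorm_add_le hs (hG.fun_sub hF) hF
  have hsymm : periodNorm s (fun t => G t - F t) = periodNorm s (fun t => F t - G t) :=
    periodNorm_congr fun t => norm_sub_rev _ _
  simp only [sub_add_cancel] at hFG hGF
  exact abs_le.2 ⟨by linarith, by linarith⟩

lemma intervalIntegrable_norm_rpow (hs : 0 ≤ s) {F : ℝ → E} (hF : Continuous F) (a b : ℝ) :
    IntervalIntegrable (fun t => ‖F t‖ ^ s) volume a b :=
  (hF.norm.rpow_const fun _ => Or.inr hs).intervalIntegrable _ _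

lemma periodNorm_mono (hs : 0 ≤ s) {F : ℝ → E} {G : ℝ → E'} (hF : Continuous F)
    (hG : Continuous G) (h : ∀ t ∈ Set.Icc (-π) π, ‖F t‖ ≤ ‖G t‖) :
    periodNorm s F ≤ periodNorm s G := by
  refine rpow_le_rpow (integral_norm_rpow_nonneg s F) ?_ (by positivity)
  exact intervalIntegral.integral_mono_on neg_pi_le_pi (intervalIntegrable_norm_rpow hs hF _ _)
    (intervalIntegrable_norm_rpow hs hG _ _) fun t ht => rpow_le_rpow (norm_nonneg _) (h t ht) hs

lemma periodNorm_const (hs : s ≠ 0) (c : E) :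
    periodNorm s (fun _ => c) = (2 * π) ^ (1 / s) * ‖c‖ := by
  rw [periodNorm, intervalIntegral.integral_const, smul_eq_mul, sub_neg_eq_add, ← two_mul,
    mul_rpow (by positivity) (by positivity), ← rpow_mul (norm_nonneg _), mul_one_div_cancel hs,
    rpow_one]

lemma periodNorm_const_mul_norm (hs : s ≠ 0) {c : ℝ} (hc : 0 ≤ c) (F : ℝ → E) :
    periodNorm s (fun t => c * ‖F t‖) = c * periodNorm s F := by
  simp_rw [periodNorm, norm_mul, norm_norm, norm_of_nonneg hc, mul_rpow hc (norm_nonneg _)]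
  rw [intervalIntegral.integral_const_mul, mul_rpow (by positivity)
    (integral_norm_rpow_nonneg s F), ← rpow_mul hc, mul_one_div_cancel hs, rpow_one]

lemma periodNorm_le_const_mul (hs : 0 < s) {c : ℝ} (hc : 0 ≤ c) {F : ℝ → E} {G : ℝ → E'}
    (hF : Continuous F) (hG : Continuous G) (h : ∀ t ∈ Set.Icc (-π) π, ‖F t‖ ≤ c * ‖G t‖) :
    periodNorm s F ≤ c * periodNorm s G := by
  rw [← periodNorm_const_mul_norm hs.ne' hc G]
  refine periodNorm_mono hs.le hF (by fun_prop) fun t ht => ?_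
  rw [norm_mul, norm_norm, norm_of_nonneg hc]
  exact h t ht

lemma periodNorm_comp_add_right {F : ℝ → E} (hF : Function.Periodic F (2 * π)) (h : ℝ) :
    periodNorm s (fun t => F (t + h)) = periodNorm s F := by
  have hper : Function.Periodic (fun t => ‖F t‖ ^ s) (2 * π) := fun t => by simp only [hF t]
  have hshift := hper.intervalIntegral_add_eq (-π + h) (-π)
  rw [show -π + h + 2 * π = π + h by ring, show -π + 2 * π = π by ring] at hshift
  rw [periodNorm, intervalIntegral.integral_comp_add_right (fun t => ‖F t‖ ^ s) h, hshift,
    periodNorm]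

lemma periodNorm_comp_neg (F : ℝ → E) : periodNorm s (fun t => F (-t)) = periodNorm s F := by
  rw [periodNorm, intervalIntegral.integral_comp_neg (fun t => ‖F t‖ ^ s), neg_neg, periodNorm]

end PeriodNorm

/-! ### Averaging out the phase of a modulated function -/

/-- The real part of `F` after modulation by a carrier of frequency `n` and phase `u`. -/
noncomputable def modulatedRe (n : ℕ) (u : ℝ) (F : ℝ → ℂ) (t : ℝ) : ℝ :=
  (Complex.exp (((n * t + u : ℝ) : ℂ) * Complex.I) * F t).re

/-- The `L^s` mean of `|cos|` over a period. -/
noncomputable def cosMean (s : ℝ) : ℝ := cosNormR s / (2 * π) ^ (1 / s)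

section Modulation

variable {s : ℝ} {F : ℝ → ℂ}

lemma continuous_modulatedRe (n : ℕ) (u : ℝ) (hF : Continuous F) :
    Continuous (modulatedRe n u F) := by
  unfold modulatedRe; fun_prop

lemma continuous_norm_modulatedRe_rpow (hs : 0 ≤ s) (n : ℕ) (hF : Continuous F) :
    Continuous (Function.uncurry fun u t => ‖modulatedRe n u F t‖ ^ s) := by
  refine Continuous.rpow_const ?_ fun _ => Or.inr hs
  unfold modulatedRe; fun_prop

lemma modulatedRe_eq_norm_mul_cos (n : ℕ) (u : ℝ) (F : ℝ → ℂ) (t : ℝ) :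
    modulatedRe n u F t = ‖F t‖ * cos (u + (n * t + (F t).arg)) := by
  conv_lhs => rw [modulatedRe, ← Complex.norm_mul_exp_arg_mul_I (F t)]
  rw [mul_left_comm, ← Complex.exp_add, ← add_mul, ← Complex.ofReal_add, Complex.re_ofReal_mul,
    Complex.exp_ofReal_mul_I_re, add_comm (n * t) u, add_assoc]

lemma norm_modulatedRe_le (n : ℕ) (u : ℝ) (F : ℝ → ℂ) (t : ℝ) :
    ‖modulatedRe n u F t‖ ≤ ‖F t‖ := by
  rw [modulatedRe_eq_norm_mul_cos, norm_mul, norm_norm]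
  exact mul_le_of_le_one_right (norm_nonneg _) (abs_cos_le_one _)

lemma modulatedRe_sub (n : ℕ) (u : ℝ) (F G : ℝ → ℂ) (t : ℝ) :
    modulatedRe n u F t - modulatedRe n u G t = modulatedRe n u (fun t => F t - G t) t := by
  simp only [modulatedRe, mul_sub, Complex.sub_re]

lemma modulatedRe_periodic (n : ℕ) (u : ℝ) (hF : Function.Periodic F (2 * π)) :
    Function.Periodic (modulatedRe n u F) (2 * π) := by
  intro t
  have hphase : u + (n * (t + 2 * π) + (F t).arg) = u + (n * t + (F t).arg) + n * (2 * π) := by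
    ring
  rw [modulatedRe_eq_norm_mul_cos, modulatedRe_eq_norm_mul_cos, hF t, hphase,
    cos_add_nat_mul_two_pi]

lemma modulatedRe_comp_sub {n : ℕ} (hn : 0 < n) (c u : ℝ) (F : ℝ → ℂ) (t : ℝ) :
    modulatedRe n c (fun x => F (x - (u - c) / n)) (t + (u - c) / n) = modulatedRe n u F t := by
  have hphase : n * (t + (u - c) / n) + c = n * t + u := by field_simp; ring
  simp only [modulatedRe, add_sub_cancel_right, hphase]

lemma integral_abs_cos_rpow_nonneg (s : ℝ) : 0 ≤ ∫ t in (0 : ℝ)..(2 * π), |cos t| ^ s :=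
  intervalIntegral.integral_nonneg (by positivity) fun _ _ => by positivity

lemma integral_abs_cos_add_rpow (c θ s : ℝ) :
    ∫ u in (c - π)..(c + π), |cos (u + θ)| ^ s = ∫ t in (0 : ℝ)..(2 * π), |cos t| ^ s := by
  have hper : Function.Periodic (fun u => |cos u| ^ s) (2 * π) := fun u => by simp
  have hshift := hper.intervalIntegral_add_eq (c - π + θ) 0
  rw [zero_add, show c - π + θ + 2 * π = c + π + θ by ring] at hshift
  rw [intervalIntegral.integral_comp_add_right (fun u => |cos u| ^ s), hshift]

lemma cosMean_nonneg (s : ℝ) : 0 ≤ cosMean s :=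
  div_nonneg (rpow_nonneg (integral_abs_cos_rpow_nonneg s) _) (by positivity)

lemma cosMean_rpow (hs : s ≠ 0) :
    cosMean s ^ s = (∫ t in (0 : ℝ)..(2 * π), |cos t| ^ s) / (2 * π) := by
  have hI := integral_abs_cos_rpow_nonneg s
  rw [cosMean, cosNormR, div_rpow (rpow_nonneg hI _) (by positivity), ← rpow_mul hI,
    ← rpow_mul (by positivity), one_div_mul_cancel hs, rpow_one, rpow_one]

lemma cosMean_le_one (hs : 0 < s) : cosMean s ≤ 1 := by
  have hcont : Continuous fun t => |cos t| ^ s := by fun_prop (disch := exact hs.le)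
  have hint : ∫ t in (0 : ℝ)..(2 * π), |cos t| ^ s ≤ ∫ _t in (0 : ℝ)..(2 * π), (1 : ℝ) :=
    intervalIntegral.integral_mono_on (by positivity) (hcont.intervalIntegrable _ _) (by simp)
      fun t _ => rpow_le_one (abs_nonneg _) (abs_cos_le_one _) hs.le
  rw [← rpow_le_rpow_iff (cosMean_nonneg s) zero_le_one hs, cosMean_rpow hs.ne', one_rpow,
    div_le_one (by positivity)]
  simpa using hint

lemma average_periodNorm_modulatedRe_rpow (hs : 0 < s) (hF : Continuous F) (n : ℕ) (c : ℝ) :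
    ⨍ u in (c - π)..(c + π), periodNorm s (modulatedRe n u F) ^ s =
      (cosMean s * periodNorm s F) ^ s := by
  have hswap : ∫ u in (c - π)..(c + π), ∫ t in (-π)..π, ‖modulatedRe n u F t‖ ^ s =
      ∫ t in (-π)..π, ∫ u in (c - π)..(c + π), ‖modulatedRe n u F t‖ ^ s :=
    intervalIntegral_intervalIntegral_swap <|
      ((continuous_norm_modulatedRe_rpow hs.le n hF).continuousOn.integrableOn_compact
        (isCompact_uIcc.prod isCompact_uIcc)).mono_set
        (Set.prod_mono Set.uIoc_subset_uIcc Set.uIoc_subset_uIcc)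
  have hphase : ∀ t, ∫ u in (c - π)..(c + π), ‖modulatedRe n u F t‖ ^ s =
      (∫ t in (0 : ℝ)..(2 * π), |cos t| ^ s) * ‖F t‖ ^ s := fun t => by
    simp_rw [modulatedRe_eq_norm_mul_cos, norm_mul, norm_norm, norm_eq_abs,
      mul_rpow (norm_nonneg _) (abs_nonneg _)]
    rw [intervalIntegral.integral_const_mul, integral_abs_cos_add_rpow, mul_comm]
  simp_rw [interval_average_eq_div, periodNorm_rpow hs.ne', hswap, hphase]
  rw [intervalIntegral.integral_const_mul, mul_rpow (cosMean_nonneg s) (periodNorm_nonneg s F),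
    cosMean_rpow hs.ne', periodNorm_rpow hs.ne']
  ring

lemma continuous_periodNorm_modulatedRe_rpow (hs : 0 < s) (hF : Continuous F) (n : ℕ) :
    Continuous fun u => periodNorm s (modulatedRe n u F) ^ s := by
  simp_rw [periodNorm_rpow hs.ne']
  exact intervalIntegral.continuous_parametric_intervalIntegral_of_continuous'
    (continuous_norm_modulatedRe_rpow hs.le n hF) _ _

lemma exists_periodNorm_modulatedRe_eq (hs : 0 < s) (hF : Continuous F) (n : ℕ) (c : ℝ) :
    ∃ u, |u - c| ≤ π ∧ periodNorm s (modulatedRe n u F) = cosMean s * periodNorm s F := by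
  have hlt : c - π < c + π := by linarith [pi_pos]
  obtain ⟨u, hu, hval⟩ := exists_eq_interval_average hlt.ne
    (continuous_periodNorm_modulatedRe_rpow hs hF n).continuousOn
  rw [Set.uIoo_of_lt hlt] at hu
  rw [average_periodNorm_modulatedRe_rpow hs hF, rpow_left_inj (periodNorm_nonneg _ _)
    (mul_nonneg (cosMean_nonneg s) (periodNorm_nonneg _ _)) hs.ne'] at hval
  exact ⟨u, abs_le.2 ⟨by linarith [hu.1], by linarith [hu.2]⟩, hval⟩

-- Changing the phase by `u - c` amounts to translating `F` by `(u - c) / n`.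
lemma abs_periodNorm_modulatedRe_sub_phase_le (hs : 1 ≤ s) (hF : Continuous F)
    (hper : Function.Periodic F (2 * π)) {n : ℕ} (hn : 0 < n) (c u : ℝ) :
    |periodNorm s (modulatedRe n c F) - periodNorm s (modulatedRe n u F)| ≤
      periodNorm s (fun t => F (t + (u - c) / n) - F t) := by
  set h := (u - c) / n
  set G : ℝ → ℂ := fun t => F (t - h)
  have hG : Continuous G := by fun_prop
  have hGper : Function.Periodic G (2 * π) := hper.sub_const h
  have htranslate : periodNorm s (modulatedRe n u F) = periodNorm s (modulatedRe n c G) := by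
    rw [← periodNorm_comp_add_right (modulatedRe_periodic n c hGper) h]
    exact periodNorm_congr fun t => by rw [modulatedRe_comp_sub hn]
  calc |periodNorm s (modulatedRe n c F) - periodNorm s (modulatedRe n u F)|
      ≤ periodNorm s (fun t => modulatedRe n c F t - modulatedRe n c G t) := by
        rw [htranslate]
        exact abs_periodNorm_sub_le hs (continuous_modulatedRe n c hF)
          (continuous_modulatedRe n c hG)
    _ ≤ periodNorm s (fun t => F t - G t) := by
        simp_rw [modulatedRe_sub]
        exact periodNorm_mono (by linarith) (continuous_modulatedRe n c (hF.sub hG)) (hF.sub hG)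
          fun t _ => norm_modulatedRe_le n c _ t
    _ = periodNorm s (fun t => F (t + h) - F t) := by
        have hdiff : Function.Periodic (fun t => F t - G t) (2 * π) := hper.sub hGper
        rw [← periodNorm_comp_add_right hdiff h]
        exact periodNorm_congr fun t => by simp [G]

theorem abs_periodNorm_modulatedRe_sub_cosMean_mul_le (hs : 1 ≤ s) (hF : Continuous F)
    (hper : Function.Periodic F (2 * π)) {n : ℕ} (hn : 0 < n) (c : ℝ) {η : ℝ}
    (hη : ∀ h, |h| ≤ π / n → periodNorm s (fun t => F (t + h) - F t) ≤ η) :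
    |periodNorm s (modulatedRe n c F) - cosMean s * periodNorm s F| ≤ η := by
  obtain ⟨u, hu, hval⟩ := exists_periodNorm_modulatedRe_eq (by linarith) hF n c
  rw [← hval]
  refine (abs_periodNorm_modulatedRe_sub_phase_le hs hF hper hn c u).trans (hη _ ?_)
  rw [abs_div, Nat.abs_cast]
  gcongr

end Modulation

/-! ### Linearization of the exponent `α x ^ r` at `n` -/

lemma sum_div_one_add_mul_sq_le {l : ℝ} (hl : 0 < l) (K : ℕ) :
    ∑ k ∈ Finset.range (K + 1), l / (1 + l * k) ^ 2 ≤ l + 1 - 1 / (1 + l * K) := by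
  induction K with
  | zero => simp
  | succ K ih =>
    have htelescope : l / (1 + l * ((K + 1 : ℕ) : ℝ)) ^ 2 ≤
        1 / (1 + l * K) - 1 / (1 + l * ((K + 1 : ℕ) : ℝ)) := by
      push_cast
      have hK : 0 < 1 + l * (K : ℝ) := by positivity
      have hK' : 0 < 1 + l * ((K : ℝ) + 1) := by positivity
      rw [div_sub_div _ _ hK.ne' hK'.ne', div_le_div_iff₀ (by positivity) (by positivity)]
      nlinarith [mul_pos hl (mul_pos hl hK')]
    rw [Finset.sum_range_succ]
    linarith

lemma sum_range_div_one_add_mul_sq_le {l : ℝ} (hl : 0 < l) (K : ℕ) :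
    ∑ k ∈ Finset.range K, l / (1 + l * k) ^ 2 ≤ l + 1 :=
  calc ∑ k ∈ Finset.range K, l / (1 + l * k) ^ 2
      ≤ ∑ k ∈ Finset.range (K + 1), l / (1 + l * k) ^ 2 :=
        Finset.sum_le_sum_of_subset_of_nonneg (Finset.range_mono K.le_succ)
          fun _ _ _ => by positivity
    _ ≤ l + 1 - 1 / (1 + l * K) := sum_div_one_add_mul_sq_le hl K
    _ ≤ l + 1 := sub_le_self _ (by positivity)

lemma summable_div_one_add_mul_sq {l : ℝ} (hl : 0 < l) :
    Summable fun k : ℕ => l / (1 + l * k) ^ 2 :=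
  summable_of_sum_range_le (fun _ => by positivity) (sum_range_div_one_add_mul_sq_le hl)

lemma tsum_div_one_add_mul_sq_le {l : ℝ} (hl : 0 < l) :
    ∑' k : ℕ, l / (1 + l * k) ^ 2 ≤ l + 1 :=
  Real.tsum_le_of_sum_range_le (fun _ => by positivity) (sum_range_div_one_add_mul_sq_le hl)

lemma summable_exp_neg_mul_rpow {α r : ℝ} (hα : 0 < α) (hr : 0 < r) :
    Summable fun k : ℕ => exp (-α * (k : ℝ) ^ r) := by
  have hO := (isLittleO_exp_neg_mul_rpow_atTop hα (-2 / r)).isBigO.comp_tendsto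
    ((tendsto_rpow_atTop hr).comp tendsto_natCast_atTop_atTop)
  refine summable_of_isBigO_nat (summable_nat_rpow.2 (by norm_num : (-2 : ℝ) < -1)) ?_
  refine hO.congr_right fun k => ?_
  simp only [Function.comp_apply]
  rw [← rpow_mul (Nat.cast_nonneg k), mul_div_cancel₀ _ hr.ne']

/-- The increment over `[n, n + u]` of the exponent `α x ^ r`. -/
noncomputable def exponentGap (α r n u : ℝ) : ℝ := α * ((n + u) ^ r - n ^ r)

/-- The slope at `n` of the exponent `α x ^ r`. -/
noncomputable def decayRate (α r n : ℝ) : ℝ := α * r * n ^ (r - 1)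

/-- The order `1 / (α r n ^ r)` of the relative error made when the exponent `α x ^ r` is replaced
by its tangent at `n`. -/
noncomputable def linearizationError (α r n : ℝ) : ℝ := 1 / (decayRate α r n * n)

/-- The difference at `n + u` between the normalized coefficient `exp (-α x ^ r) / exp (-α n ^ r)`
and its geometric approximation. -/
noncomputable def coeffError (α r n u : ℝ) : ℝ :=
  exp (-exponentGap α r n u) - exp (-(decayRate α r n * u))

section Linearization

variable {α r n u : ℝ}

lemma decayRate_pos (hα : 0 < α) (hr : 0 < r) (hn : 0 < n) : 0 < decayRate α r n := by
  unfold decayRate; positivity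

lemma decayRate_mul_self (hn : n ≠ 0) : decayRate α r n * n = α * r * n ^ r := by
  rw [decayRate, rpow_sub_one hn]; field_simp

lemma linearizationError_pos (hα : 0 < α) (hr : 0 < r) (hn : 0 < n) :
    0 < linearizationError α r n := by
  have := decayRate_pos hα hr hn
  unfold linearizationError; positivity

lemma linearizationError_mul_decayRate_mul (hα : 0 < α) (hr : 0 < r) (hn : 0 < n) (u : ℝ) :
    linearizationError α r n * (decayRate α r n * u) = u / n := by
  have := decayRate_pos hα hr hn
  rw [linearizationError]; field_simp

lemma exponentGap_eq (hn : 0 < n) (hu : 0 ≤ u) :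
    exponentGap α r n u = α * n ^ r * ((1 + u / n) ^ r - 1) := by
  rw [exponentGap, show n + u = n * (1 + u / n) by field_simp, mul_rpow hn.le (by positivity)]
  ring

lemma exponentGap_le (hα : 0 ≤ α) (hr0 : 0 ≤ r) (hr1 : r ≤ 1) (hn : 0 < n) (hu : 0 ≤ u) :
    exponentGap α r n u ≤ decayRate α r n * u := by
  have hu' : -1 ≤ u / n := by linarith [div_nonneg hu hn.le]
  have hbernoulli := rpow_one_add_le_one_add_mul_self hu' hr0 hr1
  calc exponentGap α r n u = α * n ^ r * ((1 + u / n) ^ r - 1) := exponentGap_eq hn hu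
    _ ≤ α * n ^ r * (r * (u / n)) := by gcongr; linarith
    _ = decayRate α r n * u := by rw [decayRate, rpow_sub_one hn.ne']; field_simp

lemma decayRate_mul_log_le_exponentGap (hα : 0 ≤ α) (hn : 0 < n) (hu : 0 ≤ u) :
    decayRate α r n * n * log (1 + u / n) ≤ exponentGap α r n u := by
  have hpos : 0 < 1 + u / n := by positivity
  have hlog : r * log (1 + u / n) ≤ (1 + u / n) ^ r - 1 := by
    rw [rpow_def_of_pos hpos]
    linarith [add_one_le_exp (log (1 + u / n) * r)]
  calc decayRate α r n * n * log (1 + u / n) = α * n ^ r * (r * log (1 + u / n)) := by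
        rw [decayRate_mul_self hn.ne']; ring
    _ ≤ α * n ^ r * ((1 + u / n) ^ r - 1) := by gcongr
    _ = exponentGap α r n u := (exponentGap_eq hn hu).symm

lemma decayRate_mul_sub_exponentGap_le (hα : 0 < α) (hr : 0 < r) (hn : 0 < n) (hu : 0 ≤ u) :
    decayRate α r n * u - exponentGap α r n u ≤
      linearizationError α r n * (decayRate α r n * u) ^ 2 := by
  have hl := decayRate_pos hα hr hn
  have hpos : 0 < 1 + u / n := by positivity
  have hquad : u / n - (u / n) ^ 2 ≤ 1 - (1 + u / n)⁻¹ := by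
    rw [show 1 - (1 + u / n)⁻¹ = (u / n) / (1 + u / n) by field_simp; ring, le_div_iff₀ hpos]
    nlinarith [pow_nonneg (div_nonneg hu hn.le) 3]
  have hlower : decayRate α r n * n * (u / n - (u / n) ^ 2) ≤ exponentGap α r n u := by
    refine le_trans ?_ (decayRate_mul_log_le_exponentGap hα.le hn hu)
    gcongr
    exact hquad.trans (one_sub_inv_le_log_of_pos hpos)
  have hexpand : decayRate α r n * n * (u / n - (u / n) ^ 2) =
      decayRate α r n * u - linearizationError α r n * (decayRate α r n * u) ^ 2 := by
    rw [linearizationError]; field_simp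
  linarith

-- Bernoulli turns the logarithmic lower bound on the gap into polynomial decay of any fixed order
-- at most `α r n ^ r`; order eight suffices below.
lemma exp_neg_exponentGap_le (hα : 0 < α) (hr : 0 < r) (hn : 0 < n)
    (hN : 8 ≤ decayRate α r n * n) (hu : 0 ≤ u) :
    exp (-exponentGap α r n u) ≤ 1 / (1 + decayRate α r n * u / 8) ^ 8 := by
  have hl := decayRate_pos hα hr hn
  have hroot : 1 + decayRate α r n * u / 8 ≤ exp (exponentGap α r n u / 8) :=
    calc 1 + decayRate α r n * u / 8 = 1 + decayRate α r n * n / 8 * (u / n) := by field_simp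
      _ ≤ (1 + u / n) ^ (decayRate α r n * n / 8) :=
          one_add_mul_self_le_rpow_one_add (by linarith [div_nonneg hu hn.le]) (by linarith)
      _ = exp (log (1 + u / n) * (decayRate α r n * n / 8)) := rpow_def_of_pos (by positivity) _
      _ ≤ exp (exponentGap α r n u / 8) :=
          exp_le_exp.2 (by linarith [decayRate_mul_log_le_exponentGap (r := r) hα.le hn hu])
  rw [exp_neg, ← one_div]
  refine one_div_le_one_div_of_le (by positivity) ?_
  calc (1 + decayRate α r n * u / 8) ^ 8 ≤ exp (exponentGap α r n u / 8) ^ 8 := by gcongr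
    _ = exp (exponentGap α r n u) := by rw [← exp_nat_mul]; congr 1; push_cast; ring

lemma mul_one_add_le_five_mul_pow {x : ℝ} (hx : 0 ≤ x) : x * (1 + x) ≤ 5 * (1 + x / 8) ^ 4 := by
  obtain ⟨y, rfl⟩ : ∃ y, x = 8 * y := ⟨x / 8, by ring⟩
  have hy : 0 ≤ y := by linarith
  rw [show 8 * y / 8 = y by ring]
  nlinarith [mul_nonneg hy (sq_nonneg (y - 1)), sq_nonneg (y ^ 2 - y), sq_nonneg (y ^ 2 - 1),
    sq_nonneg (y - 1), mul_nonneg hy (sq_nonneg (y - 7 / 10)), sq_nonneg (y ^ 2 + 2 * y - 2)]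

lemma sq_div_pow_eight_le {x : ℝ} (hx : 0 ≤ x) :
    x ^ 2 / (1 + x / 8) ^ 8 ≤ 25 / (1 + x) ^ 2 := by
  have hsq : (x * (1 + x)) ^ 2 ≤ (5 * (1 + x / 8) ^ 4) ^ 2 :=
    pow_le_pow_left₀ (by positivity) (mul_one_add_le_five_mul_pow hx) 2
  rw [div_le_div_iff₀ (by positivity) (by positivity)]
  linarith

lemma self_div_pow_eight_le {x : ℝ} (hx : 0 ≤ x) : x / (1 + x / 8) ^ 8 ≤ 10 / (1 + x) ^ 2 := by
  have hbernoulli : 1 + x ≤ 2 * (1 + x / 8) ^ 4 := by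
    have := one_add_mul_le_pow (a := x / 8) (by linarith) 4
    push_cast at this
    linarith
  have hprod : x * (1 + x) * (1 + x) ≤ 5 * (1 + x / 8) ^ 4 * (2 * (1 + x / 8) ^ 4) :=
    mul_le_mul (mul_one_add_le_five_mul_pow hx) hbernoulli (by positivity) (by positivity)
  rw [div_le_div_iff₀ (by positivity) (by positivity)]
  linarith

lemma coeffError_nonneg (hα : 0 ≤ α) (hr0 : 0 ≤ r) (hr1 : r ≤ 1) (hn : 0 < n) (hu : 0 ≤ u) :
    0 ≤ coeffError α r n u :=
  sub_nonneg.2 <| exp_le_exp.2 <| neg_le_neg <| exponentGap_le hα hr0 hr1 hn hu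

lemma coeffError_le_exp_mul (α r n u : ℝ) :
    coeffError α r n u ≤
      exp (-exponentGap α r n u) * (decayRate α r n * u - exponentGap α r n u) := by
  have hsplit : exp (-(decayRate α r n * u)) =
      exp (-exponentGap α r n u) * exp (-(decayRate α r n * u - exponentGap α r n u)) := by
    rw [← exp_add]; congr 1; ring
  rw [coeffError, hsplit]
  nlinarith [exp_pos (-exponentGap α r n u),
    add_one_le_exp (-(decayRate α r n * u - exponentGap α r n u))]

lemma abs_coeffError_le (hα : 0 < α) (hr0 : 0 < r) (hr1 : r ≤ 1) (hn : 0 < n)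
    (hN : 8 ≤ decayRate α r n * n) (hu : 0 ≤ u) :
    |coeffError α r n u| ≤ 25 * linearizationError α r n / (1 + decayRate α r n * u) ^ 2 := by
  have hx : 0 ≤ decayRate α r n * u := mul_nonneg (decayRate_pos hα hr0 hn).le hu
  have hε := linearizationError_pos hα hr0 hn
  have hgap := exponentGap_le hα.le hr0.le hr1 hn hu
  rw [abs_of_nonneg (coeffError_nonneg hα.le hr0.le hr1 hn hu)]
  set x := decayRate α r n * u
  set ε := linearizationError α r n
  calc coeffError α r n u ≤ exp (-exponentGap α r n u) * (x - exponentGap α r n u) :=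
        coeffError_le_exp_mul α r n u
    _ ≤ 1 / (1 + x / 8) ^ 8 * (ε * x ^ 2) :=
        mul_le_mul (exp_neg_exponentGap_le hα hr0 hn hN hu)
          (decayRate_mul_sub_exponentGap_le hα hr0 hn hu) (by linarith) (by positivity)
    _ = ε * (x ^ 2 / (1 + x / 8) ^ 8) := by ring
    _ ≤ ε * (25 / (1 + x) ^ 2) := by gcongr ε * ?_; exact sq_div_pow_eight_le hx
    _ = 25 * ε / (1 + x) ^ 2 := by ring

lemma hasDerivAt_coeffError (hnu : n + u ≠ 0) :
    HasDerivAt (coeffError α r n) (decayRate α r n * exp (-(decayRate α r n * u)) -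
      decayRate α r (n + u) * exp (-exponentGap α r n u)) u := by
  have hgap : HasDerivAt (exponentGap α r n) (decayRate α r (n + u)) u := by
    refine (((((hasDerivAt_id u).const_add n).rpow_const (Or.inl hnu)).sub_const
      (n ^ r)).const_mul α).congr_deriv ?_
    simp only [decayRate, id]; ring
  have hlin : HasDerivAt (fun u => decayRate α r n * u) (decayRate α r n) u := by
    simpa using (hasDerivAt_id u).const_mul (decayRate α r n)
  exact (hgap.fun_neg.exp.fun_sub hlin.fun_neg.exp).congr_deriv (by ring)

lemma decayRate_add_eq (hn : 0 < n) (hu : 0 ≤ u) :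
    decayRate α r (n + u) = decayRate α r n * (1 + u / n) ^ (r - 1) := by
  rw [decayRate, decayRate, show n + u = n * (1 + u / n) by field_simp,
    mul_rpow hn.le (by positivity)]
  ring

lemma decayRate_add_le (hα : 0 < α) (hr0 : 0 < r) (hr1 : r ≤ 1) (hn : 0 < n) (hu : 0 ≤ u) :
    decayRate α r (n + u) ≤ decayRate α r n := by
  rw [decayRate_add_eq hn hu]
  exact mul_le_of_le_one_right (decayRate_pos hα hr0 hn).le
    (rpow_le_one_of_one_le_of_nonpos (by linarith [div_nonneg hu hn.le]) (by linarith))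

lemma decayRate_sub_decayRate_add_le (hα : 0 < α) (hr : 0 < r) (hn : 0 < n) (hu : 0 ≤ u) :
    decayRate α r n - decayRate α r (n + u) ≤
      decayRate α r n * (linearizationError α r n * (decayRate α r n * u)) := by
  have hl := decayRate_pos hα hr hn
  have hpos : 0 < 1 + u / n := by positivity
  have hpow : 1 - u / n ≤ (1 + u / n) ^ (r - 1) :=
    calc 1 - u / n ≤ (1 + u / n)⁻¹ := by
          rw [← one_div, le_div_iff₀ hpos]; nlinarith [sq_nonneg (u / n)]
      _ = (1 + u / n) ^ (-1 : ℝ) := (rpow_neg_one _).symm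
      _ ≤ (1 + u / n) ^ (r - 1) :=
          rpow_le_rpow_of_exponent_le (by linarith [div_nonneg hu hn.le]) (by linarith)
  rw [linearizationError_mul_decayRate_mul hα hr hn, decayRate_add_eq hn hu]
  nlinarith

lemma abs_deriv_coeffError_le (hα : 0 < α) (hr0 : 0 < r) (hr1 : r ≤ 1) (hn : 0 < n)
    (hN : 8 ≤ decayRate α r n * n) (hu : 0 ≤ u) :
    |decayRate α r n * exp (-(decayRate α r n * u)) -
      decayRate α r (n + u) * exp (-exponentGap α r n u)| ≤
      35 * (linearizationError α r n * decayRate α r n) / (1 + decayRate α r n * u) ^ 2 := by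
  have hl := decayRate_pos hα hr0 hn
  have hε := linearizationError_pos hα hr0 hn
  have hx : 0 ≤ decayRate α r n * u := by positivity
  have herror := abs_coeffError_le hα hr0 hr1 hn hN hu
  have hslope := decayRate_sub_decayRate_add_le hα hr0 hn hu
  have hdecay := exp_neg_exponentGap_le hα hr0 hn hN hu
  have hmono := decayRate_add_le hα hr0 hr1 hn hu
  have hsplit : decayRate α r n * exp (-(decayRate α r n * u)) -
      decayRate α r (n + u) * exp (-exponentGap α r n u) = -(decayRate α r n * coeffError α r n u) +
        (decayRate α r n - decayRate α r (n + u)) * exp (-exponentGap α r n u) := by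
    rw [coeffError]; ring
  rw [hsplit]
  set l := decayRate α r n
  set ε := linearizationError α r n
  set x := l * u
  have hfirst : |-(l * coeffError α r n u)| ≤ l * (25 * ε / (1 + x) ^ 2) := by
    rw [abs_neg, abs_mul, abs_of_pos hl]; gcongr
  have hsecond : |(l - decayRate α r (n + u)) * exp (-exponentGap α r n u)| ≤
      l * ε * (10 / (1 + x) ^ 2) := by
    rw [abs_of_nonneg (mul_nonneg (by linarith) (exp_pos _).le)]
    calc (l - decayRate α r (n + u)) * exp (-exponentGap α r n u)
        ≤ l * (ε * x) * (1 / (1 + x / 8) ^ 8) :=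
          mul_le_mul hslope hdecay (exp_pos _).le (by positivity)
      _ = l * ε * (x / (1 + x / 8) ^ 8) := by ring
      _ ≤ l * ε * (10 / (1 + x) ^ 2) := by gcongr l * ε * ?_; exact self_div_pow_eight_le hx
  calc |-(l * coeffError α r n u) + (l - decayRate α r (n + u)) * exp (-exponentGap α r n u)|
      ≤ l * (25 * ε / (1 + x) ^ 2) + l * ε * (10 / (1 + x) ^ 2) :=
        (abs_add_le _ _).trans (add_le_add hfirst hsecond)
    _ = 35 * (ε * l) / (1 + x) ^ 2 := by ring

lemma abs_coeffError_add_one_sub_le (hα : 0 < α) (hr0 : 0 < r) (hr1 : r ≤ 1) (hn : 0 < n)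
    (hN : 8 ≤ decayRate α r n * n) (hu : 0 ≤ u) :
    |coeffError α r n (u + 1) - coeffError α r n u| ≤
      35 * (linearizationError α r n * decayRate α r n) / (1 + decayRate α r n * u) ^ 2 := by
  have hl := decayRate_pos hα hr0 hn
  have hε := linearizationError_pos hα hr0 hn
  have hmvt := (convex_Icc u (u + 1)).norm_image_sub_le_of_norm_hasDerivWithin_le
    (C := 35 * (linearizationError α r n * decayRate α r n) / (1 + decayRate α r n * u) ^ 2)
    (fun v hv => (hasDerivAt_coeffError (α := α) (r := r)
      (by linarith [hv.1] : 0 < n + v).ne').hasDerivWithinAt)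
    (fun v hv => by
      refine (abs_deriv_coeffError_le hα hr0 hr1 hn hN (hu.trans hv.1)).trans ?_
      have := hv.1
      gcongr)
    (Set.left_mem_Icc.2 (by linarith)) (Set.right_mem_Icc.2 (by linarith))
  simpa using hmvt

end Linearization

/-! ### The tail series, the geometric series and the Cauchy kernel -/

/-- The amplitude `∑ exp (-α ((n + k) ^ r - n ^ r)) e ^ {ikt}` of the kernel tail: the tail of
order `n` of the generalized Poisson kernel is `exp (-α n ^ r)` times the real part of this series
modulated by `e ^ {i(nt - βπ/2)}`. -/
noncomputable def tailSeries (α r : ℝ) (n : ℕ) (t : ℝ) : ℂ :=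
  ∑' k : ℕ, (exp (-exponentGap α r n k) : ℂ) * Complex.exp (t * Complex.I) ^ k

/-- The sum of the geometric series `∑ e ^ {-lk} e ^ {ikt}`, i.e. `tailSeries` with linearized
exponent. -/
noncomputable def geometricKernel (l t : ℝ) : ℂ := (1 - Complex.exp (-(l - t * Complex.I)))⁻¹

/-- The singular part `1 / (l - it)` of `geometricKernel` at its pole `t = -il`. -/
noncomputable def cauchyKernel (l t : ℝ) : ℂ := (l - t * Complex.I)⁻¹

section OneSubExp

variable {w : ℂ}

lemma one_sub_exp_neg_re_le_norm (w : ℂ) : 1 - exp (-w.re) ≤ ‖1 - Complex.exp (-w)‖ := by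
  simpa [Complex.norm_exp] using norm_sub_norm_le (1 : ℂ) (Complex.exp (-w))

lemma mul_re_le_norm_one_sub_exp_neg (h0 : 0 ≤ w.re) (h1 : w.re ≤ 1 / 100) :
    0.99 * w.re ≤ ‖1 - Complex.exp (-w)‖ := by
  have hexp := (abs_le.1 (Real.abs_exp_sub_one_sub_id_le (x := -w.re)
    (by rw [abs_neg, abs_of_nonneg h0]; linarith))).2
  have hnorm := one_sub_exp_neg_re_le_norm w
  nlinarith

lemma two_mul_abs_div_pi_le_norm_one_sub_exp {t : ℝ} (ht : |t| ≤ π) :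
    2 * |t| / π ≤ ‖1 - Complex.exp (t * Complex.I)‖ := by
  have hsin := mul_abs_le_abs_sin (x := t / 2) (by rw [abs_div, abs_two]; linarith)
  rw [norm_sub_rev, mul_comm (t : ℂ), Complex.norm_exp_I_mul_ofReal_sub_one, norm_eq_abs, abs_mul,
    abs_two]
  calc 2 * |t| / π = 2 * (2 / π * |t / 2|) := by rw [abs_div, abs_two]; ring
    _ ≤ _ := by gcongr

lemma norm_one_sub_exp_neg_im_le (h0 : 0 ≤ w.re) :
    ‖1 - Complex.exp ((-w.im : ℝ) * Complex.I)‖ ≤ 2 * ‖1 - Complex.exp (-w)‖ := by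
  set z := Complex.exp ((-w.im : ℝ) * Complex.I)
  have hsplit : Complex.exp (-w) = (exp (-w.re) : ℂ) * z := by
    rw [Complex.ofReal_exp, ← Complex.exp_add]
    congr 1
    apply Complex.ext <;> simp
  have hradial : ‖Complex.exp (-w) - z‖ ≤ ‖1 - Complex.exp (-w)‖ := by
    have hq : exp (-w.re) ≤ 1 := exp_le_one_iff.2 (by linarith)
    calc ‖Complex.exp (-w) - z‖ = ‖((exp (-w.re) - 1 : ℝ) : ℂ)‖ * ‖z‖ := by
          rw [← norm_mul, hsplit]; push_cast; ring_nf
      _ = 1 - exp (-w.re) := by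
          rw [Complex.norm_exp_ofReal_mul_I, mul_one, Complex.norm_real, norm_eq_abs, abs_sub_comm,
            abs_of_nonneg (by linarith)]
      _ ≤ _ := one_sub_exp_neg_re_le_norm w
  calc ‖1 - z‖ ≤ ‖1 - Complex.exp (-w)‖ + ‖Complex.exp (-w) - z‖ :=
        norm_sub_le_norm_sub_add_norm_sub ..
    _ ≤ _ := by linarith

lemma norm_le_five_mul_norm_one_sub_exp_neg (h0 : 0 ≤ w.re) (h1 : w.re ≤ 1 / 100)
    (him : |w.im| ≤ π) : ‖w‖ ≤ 5 * ‖1 - Complex.exp (-w)‖ := by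
  have hre := mul_re_le_norm_one_sub_exp_neg h0 h1
  have him' : |w.im| ≤ π * ‖1 - Complex.exp (-w)‖ := by
    have hchord := (two_mul_abs_div_pi_le_norm_one_sub_exp (t := -w.im) (by rwa [abs_neg])).trans
      (norm_one_sub_exp_neg_im_le h0)
    rw [abs_neg, div_le_iff₀ pi_pos] at hchord
    linarith
  have hnorm := Complex.norm_le_abs_re_add_abs_im w
  rw [abs_of_nonneg h0] at hnorm
  nlinarith [pi_lt_d2, norm_nonneg (1 - Complex.exp (-w))]

lemma norm_exp_neg_le_one (h0 : 0 ≤ w.re) : ‖Complex.exp (-w)‖ ≤ 1 := by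
  simpa [Complex.norm_exp] using h0

lemma norm_exp_neg_sub_one_add_le (h0 : 0 ≤ w.re) :
    ‖Complex.exp (-w) - 1 + w‖ ≤ 3 * ‖w‖ ^ 2 := by
  rcases le_total ‖w‖ 1 with hw | hw
  · have htaylor := Complex.norm_exp_sub_one_sub_id_le (x := -w) (by rwa [norm_neg])
    rw [norm_neg, sub_neg_eq_add] at htaylor
    nlinarith [sq_nonneg ‖w‖]
  · calc ‖Complex.exp (-w) - 1 + w‖ ≤ ‖Complex.exp (-w)‖ + ‖(1 : ℂ)‖ + ‖w‖ :=
          (norm_add_le _ _).trans (by gcongr; exact norm_sub_le _ _)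
      _ ≤ 1 + 1 + ‖w‖ := by rw [norm_one]; gcongr; exact norm_exp_neg_le_one h0
      _ ≤ _ := by nlinarith

lemma norm_inv_one_sub_exp_neg_sub_inv_le (h0 : 0 < w.re) (h1 : w.re ≤ 1 / 100)
    (him : |w.im| ≤ π) : ‖(1 - Complex.exp (-w))⁻¹ - w⁻¹‖ ≤ 15 := by
  have hle := norm_le_five_mul_norm_one_sub_exp_neg h0.le h1 him
  have hw : 0 < ‖w‖ := h0.trans_le (Complex.re_le_norm w)
  have hq : 0 < ‖1 - Complex.exp (-w)‖ := by linarith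
  rw [inv_sub_inv (norm_pos_iff.1 hq) (norm_pos_iff.1 hw), norm_div, norm_mul,
    div_le_iff₀ (mul_pos hq hw), show w - (1 - Complex.exp (-w)) = Complex.exp (-w) - 1 + w by ring]
  nlinarith [norm_exp_neg_sub_one_add_le h0.le]

end OneSubExp

section ModelKernels

variable {l t : ℝ}

lemma ofReal_sub_mul_I_re (l t : ℝ) : ((l : ℂ) - t * Complex.I).re = l := by simp

lemma ofReal_sub_mul_I_im (l t : ℝ) : ((l : ℂ) - t * Complex.I).im = -t := by simp

lemma norm_ofReal_sub_mul_I_pos (hl : 0 < l) (t : ℝ) : 0 < ‖(l : ℂ) - t * Complex.I‖ := by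
  simpa using (hl.trans_eq (ofReal_sub_mul_I_re l t).symm).trans_le (Complex.re_le_norm _)

lemma norm_one_sub_exp_neg_pos (hl : 0 < l) (t : ℝ) :
    0 < ‖1 - Complex.exp (-((l : ℂ) - t * Complex.I))‖ := by
  have h := one_sub_exp_neg_re_le_norm ((l : ℂ) - t * Complex.I)
  rw [ofReal_sub_mul_I_re] at h
  have hexp : exp (-l) < 1 := Real.exp_lt_one_iff.2 (by linarith)
  linarith

lemma continuous_geometricKernel (hl : 0 < l) : Continuous (geometricKernel l) :=
  Continuous.inv₀ (by fun_prop) fun t => norm_pos_iff.1 (norm_one_sub_exp_neg_pos hl t)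

lemma continuous_cauchyKernel (hl : 0 < l) : Continuous (cauchyKernel l) :=
  Continuous.inv₀ (by fun_prop) fun t => norm_pos_iff.1 (norm_ofReal_sub_mul_I_pos hl t)

lemma exp_mul_I_periodic :
    Function.Periodic (fun t : ℝ => Complex.exp (t * Complex.I)) (2 * π) := fun t => by
  simpa using Complex.exp_mul_I_periodic (t : ℂ)

lemma exp_neg_sub_mul_I (l t : ℝ) : Complex.exp (-(l - t * Complex.I)) =
    (exp (-l) : ℂ) * Complex.exp (t * Complex.I) := by
  rw [Complex.ofReal_exp, ← Complex.exp_add]; congr 1; push_cast; ring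

lemma geometricKernel_periodic (l : ℝ) : Function.Periodic (geometricKernel l) (2 * π) :=
  fun t => by simp only [geometricKernel, exp_neg_sub_mul_I, exp_mul_I_periodic t]

lemma norm_geometricKernel_le (hl0 : 0 < l) (hl1 : l ≤ 1 / 100) (ht : |t| ≤ π) :
    ‖geometricKernel l t‖ ≤ 5 * ‖cauchyKernel l t‖ := by
  have hle := norm_le_five_mul_norm_one_sub_exp_neg (w := l - t * Complex.I) (by simpa using hl0.le)
    (by simpa using hl1) (by simpa using ht)
  have hq := norm_one_sub_exp_neg_pos hl0 t
  have hw := norm_ofReal_sub_mul_I_pos hl0 t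
  rw [geometricKernel, cauchyKernel, norm_inv, norm_inv, ← div_eq_mul_inv, ← one_div,
    div_le_div_iff₀ hq hw]
  linarith

lemma norm_geometricKernel_sub_cauchyKernel_le (hl0 : 0 < l) (hl1 : l ≤ 1 / 100) (ht : |t| ≤ π) :
    ‖geometricKernel l t - cauchyKernel l t‖ ≤ 15 :=
  norm_inv_one_sub_exp_neg_sub_inv_le (by simpa using hl0) (by simpa using hl1) (by simpa using ht)

lemma norm_geometricKernel_add_sub_le (hl0 : 0 < l) (hl1 : l ≤ 1 / 100) (t h : ℝ) :
    ‖geometricKernel l (t + h) - geometricKernel l t‖ ≤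
      |h| / (0.99 * l) * ‖geometricKernel l t‖ := by
  have hlower : 0.99 * l ≤ ‖1 - Complex.exp (-((l : ℂ) - (t + h : ℝ) * Complex.I))‖ := by
    simpa using mul_re_le_norm_one_sub_exp_neg (w := l - (t + h : ℝ) * Complex.I)
      (by simpa using hl0.le) (by simpa using hl1)
  have hth := norm_pos_iff.1 (norm_one_sub_exp_neg_pos hl0 (t + h))
  have ht := norm_pos_iff.1 (norm_one_sub_exp_neg_pos hl0 t)
  have hstep : Complex.exp (-((l : ℂ) - (t + h : ℝ) * Complex.I)) =
      Complex.exp (-((l : ℂ) - t * Complex.I)) * Complex.exp (Complex.I * h) := by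
    rw [← Complex.exp_add]; congr 1; push_cast; ring
  have hnum : ‖Complex.exp (-((l : ℂ) - t * Complex.I)) * (Complex.exp (Complex.I * h) - 1)‖ ≤
      |h| := by
    rw [norm_mul, ← one_mul |h|]
    gcongr
    · exact norm_exp_neg_le_one (by simpa using hl0.le)
    · exact Real.norm_exp_I_mul_ofReal_sub_one_le
  rw [geometricKernel, geometricKernel, inv_sub_inv hth ht, norm_div, norm_mul, norm_inv,
    ← div_eq_mul_inv, div_div]
  gcongr
  rwa [hstep, sub_sub_sub_cancel_left, ← mul_sub_one]

end ModelKernels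

section TailSeries

variable {α r l : ℝ} {n : ℕ} {t : ℝ}

lemma summable_exp_neg_exponentGap (hα : 0 < α) (hr : 0 < r) (n : ℕ) :
    Summable fun k : ℕ => exp (-exponentGap α r n k) := by
  refine (((summable_nat_add_iff n).2 (summable_exp_neg_mul_rpow hα hr)).mul_left
    (exp (α * (n : ℝ) ^ r))).congr fun k => ?_
  rw [← exp_add, exponentGap]
  congr 1
  push_cast
  ring_nf

lemma norm_ofReal_mul_exp_pow (a : ℝ) (t : ℝ) (k : ℕ) :
    ‖(a : ℂ) * Complex.exp (t * Complex.I) ^ k‖ = |a| := by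
  rw [norm_mul, norm_pow, Complex.norm_exp_ofReal_mul_I, one_pow, mul_one, Complex.norm_real,
    norm_eq_abs]

lemma summable_ofReal_mul_exp_pow {a : ℕ → ℝ} (ha : Summable a) (t : ℝ) :
    Summable fun k => (a k : ℂ) * Complex.exp (t * Complex.I) ^ k :=
  .of_norm (ha.abs.congr fun k => (norm_ofReal_mul_exp_pow (a k) t k).symm)

lemma continuous_tailSeries (hα : 0 < α) (hr : 0 < r) (n : ℕ) : Continuous (tailSeries α r n) := by
  refine continuous_tsum (fun k => by fun_prop) (summable_exp_neg_exponentGap hα hr n) fun k t => ?_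
  rw [norm_ofReal_mul_exp_pow, abs_of_pos (exp_pos _)]

lemma tailSeries_periodic (α r : ℝ) (n : ℕ) : Function.Periodic (tailSeries α r n) (2 * π) :=
  fun t => by simp only [tailSeries, exp_mul_I_periodic t]

lemma hasSum_geometricKernel (hl : 0 < l) (t : ℝ) :
    HasSum (fun k : ℕ => (exp (-(l * k)) : ℂ) * Complex.exp (t * Complex.I) ^ k)
      (geometricKernel l t) := by
  have hlt : ‖Complex.exp (-((l : ℂ) - t * Complex.I))‖ < 1 := by simpa [Complex.norm_exp] using hl
  refine (hasSum_geometric_of_norm_lt_one hlt).congr_fun fun k => ?_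
  rw [exp_neg_sub_mul_I, mul_pow, ← Complex.ofReal_pow, ← exp_nat_mul]
  ring_nf

lemma summable_coeffError (hα : 0 < α) (hr : 0 < r) (hn : 0 < n) :
    Summable fun k : ℕ => coeffError α r n k := by
  have hl := decayRate_pos hα hr (Nat.cast_pos.2 hn)
  refine (summable_exp_neg_exponentGap hα hr n).sub ?_
  simpa [mul_comm] using Real.summable_exp_nat_mul_iff.2 (neg_lt_zero.2 hl)

lemma tailSeries_sub_geometricKernel (hα : 0 < α) (hr : 0 < r) (hn : 0 < n) (t : ℝ) :
    tailSeries α r n t - geometricKernel (decayRate α r n) t =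
      ∑' k : ℕ, (coeffError α r n k : ℂ) * Complex.exp (t * Complex.I) ^ k := by
  have hgeo := hasSum_geometricKernel (decayRate_pos hα hr (Nat.cast_pos.2 hn)) t
  rw [tailSeries, ← hgeo.tsum_eq, ← (summable_ofReal_mul_exp_pow
    (summable_exp_neg_exponentGap hα hr n) t).tsum_sub hgeo.summable]
  exact tsum_congr fun k => by rw [coeffError]; push_cast; ring

lemma one_sub_mul_tsum_mul_pow {a : ℕ → ℝ} {z : ℂ} (ha0 : a 0 = 0)
    (ha : Summable fun k => (a k : ℂ) * z ^ k) :
    (1 - z) * ∑' k, (a k : ℂ) * z ^ k = ∑' k, ((a (k + 1) - a k : ℝ) : ℂ) * z ^ (k + 1) := by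
  have hshift : ∑' k, (a k : ℂ) * z ^ k = ∑' k, (a (k + 1) : ℂ) * z ^ (k + 1) := by
    rw [ha.tsum_eq_zero_add, ha0, Complex.ofReal_zero, zero_mul, zero_add]
  rw [sub_mul, one_mul, ← tsum_mul_left, hshift,
    ← ((summable_nat_add_iff 1).2 ha).tsum_sub (ha.mul_left z)]
  exact tsum_congr fun k => by push_cast; ring

lemma norm_tsum_coeffError_le (hα : 0 < α) (hr0 : 0 < r) (hr1 : r ≤ 1) (hn : 0 < n)
    (hl1 : decayRate α r n ≤ 1) (hN : 8 ≤ decayRate α r n * n) (t : ℝ) :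
    decayRate α r n * ‖∑' k : ℕ, (coeffError α r n k : ℂ) * Complex.exp (t * Complex.I) ^ k‖ ≤
      50 * linearizationError α r n := by
  have hn' : (0 : ℝ) < n := Nat.cast_pos.2 hn
  set l := decayRate α r n with hl
  have hl0 : 0 < l := decayRate_pos hα hr0 hn'
  have hε := linearizationError_pos hα hr0 hn'
  have hbound := tsum_of_norm_bounded (((summable_div_one_add_mul_sq hl0).mul_left
    (25 * linearizationError α r n / l)).hasSum)
    (f := fun k : ℕ => (coeffError α r n k : ℂ) * Complex.exp (t * Complex.I) ^ k) fun k => by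
      rw [norm_ofReal_mul_exp_pow]
      refine (abs_coeffError_le hα hr0 hr1 hn' hN k.cast_nonneg).trans_eq ?_
      rw [← hl]
      field_simp
  rw [tsum_mul_left] at hbound
  calc l * _ ≤ l * (25 * linearizationError α r n / l * 2) := by
        gcongr
        refine hbound.trans ?_
        gcongr
        linarith [tsum_div_one_add_mul_sq_le hl0]
    _ = _ := by field_simp; ring

lemma norm_one_sub_mul_norm_tsum_coeffError_le (hα : 0 < α) (hr0 : 0 < r) (hr1 : r ≤ 1)
    (hn : 0 < n) (hl1 : decayRate α r n ≤ 1) (hN : 8 ≤ decayRate α r n * n) (t : ℝ) :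
    ‖1 - Complex.exp (t * Complex.I)‖ *
      ‖∑' k : ℕ, (coeffError α r n k : ℂ) * Complex.exp (t * Complex.I) ^ k‖ ≤
      70 * linearizationError α r n := by
  have hn' : (0 : ℝ) < n := Nat.cast_pos.2 hn
  have hl0 := decayRate_pos hα hr0 hn'
  have hε := linearizationError_pos hα hr0 hn'
  rw [← norm_mul, one_sub_mul_tsum_mul_pow (a := fun k => coeffError α r n k)
    (by simp [coeffError, exponentGap])
    (summable_ofReal_mul_exp_pow (summable_coeffError hα hr0 hn) t)]
  have hbound := tsum_of_norm_bounded (((summable_div_one_add_mul_sq hl0).mul_left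
    (35 * linearizationError α r n)).hasSum)
    (f := fun k : ℕ => ((coeffError α r n ↑(k + 1) - coeffError α r n k : ℝ) : ℂ) *
      Complex.exp (t * Complex.I) ^ (k + 1)) fun k => by
        rw [norm_ofReal_mul_exp_pow, Nat.cast_add_one]
        refine (abs_coeffError_add_one_sub_le hα hr0 hr1 hn' hN k.cast_nonneg).trans_eq ?_
        ring
  rw [tsum_mul_left] at hbound
  refine hbound.trans ?_
  nlinarith [tsum_div_one_add_mul_sq_le hl0]

lemma norm_tailSeries_sub_geometricKernel_le (hα : 0 < α) (hr0 : 0 < r) (hr1 : r ≤ 1)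
    (hn : 0 < n) (hl1 : decayRate α r n ≤ 1) (hN : 8 ≤ decayRate α r n * n) (ht : |t| ≤ π) :
    ‖tailSeries α r n t - geometricKernel (decayRate α r n) t‖ ≤
      160 * linearizationError α r n * ‖cauchyKernel (decayRate α r n) t‖ := by
  have hl0 := decayRate_pos hα hr0 (Nat.cast_pos.2 hn)
  have hradial := norm_tsum_coeffError_le hα hr0 hr1 hn hl1 hN t
  have hchord := norm_one_sub_mul_norm_tsum_coeffError_le hα hr0 hr1 hn hl1 hN t
  rw [tailSeries_sub_geometricKernel hα hr0 hn]
  set S := ∑' k : ℕ, (coeffError α r n k : ℂ) * Complex.exp (t * Complex.I) ^ k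
  have hangular : |t| * ‖S‖ ≤ 110 * linearizationError α r n := by
    have hle : 2 * |t| / π * ‖S‖ ≤ 70 * linearizationError α r n :=
      (mul_le_mul_of_nonneg_right (two_mul_abs_div_pi_le_norm_one_sub_exp ht)
        (norm_nonneg S)).trans hchord
    calc |t| * ‖S‖ = π / 2 * (2 * |t| / π * ‖S‖) := by field_simp
      _ ≤ 3.142 / 2 * (70 * linearizationError α r n) :=
          mul_le_mul (by linarith [pi_lt_d4]) hle (by positivity) (by norm_num)
      _ ≤ _ := by linarith [linearizationError_pos hα hr0 (Nat.cast_pos.2 hn : (0 : ℝ) < n)]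
  have hnorm : ‖(decayRate α r n : ℂ) - t * Complex.I‖ ≤ decayRate α r n + |t| := by
    simpa [abs_of_pos hl0] using Complex.norm_le_abs_re_add_abs_im (decayRate α r n - t * Complex.I)
  rw [cauchyKernel, norm_inv, ← div_eq_mul_inv, le_div_iff₀ (norm_ofReal_sub_mul_I_pos hl0 t)]
  nlinarith [norm_nonneg S]

end TailSeries

section TailSeriesNorm

variable {α r s : ℝ} {n : ℕ}

lemma periodNorm_tailSeries_sub_geometricKernel_le (hs : 0 < s) (hα : 0 < α) (hr0 : 0 < r)
    (hr1 : r ≤ 1) (hn : 0 < n) (hl1 : decayRate α r n ≤ 1) (hN : 8 ≤ decayRate α r n * n) :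
    periodNorm s (fun t => tailSeries α r n t - geometricKernel (decayRate α r n) t) ≤
      160 * linearizationError α r n * periodNorm s (cauchyKernel (decayRate α r n)) := by
  have hn' : (0 : ℝ) < n := Nat.cast_pos.2 hn
  have hl0 := decayRate_pos hα hr0 hn'
  have hε := linearizationError_pos hα hr0 hn'
  exact periodNorm_le_const_mul hs (by positivity)
    ((continuous_tailSeries hα hr0 n).sub (continuous_geometricKernel hl0))
    (continuous_cauchyKernel hl0) fun t ht =>
      norm_tailSeries_sub_geometricKernel_le hα hr0 hr1 hn hl1 hN (abs_le.2 ht)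

lemma periodNorm_geometricKernel_sub_cauchyKernel_le {l : ℝ} (hs : 1 ≤ s) (hl0 : 0 < l)
    (hl1 : l ≤ 1 / 100) : periodNorm s (fun t => geometricKernel l t - cauchyKernel l t) ≤ 95 := by
  have hlength : (2 * π) ^ (1 / s) ≤ 2 * π :=
    rpow_le_self_of_one_le (by linarith [pi_gt_three]) ((div_le_one (by linarith)).2 hs)
  calc periodNorm s (fun t => geometricKernel l t - cauchyKernel l t)
      ≤ periodNorm s (fun _ : ℝ => (15 : ℝ)) :=
        periodNorm_mono (by linarith)
          ((continuous_geometricKernel hl0).sub (continuous_cauchyKernel hl0)) continuous_const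
          fun t ht => by
            simpa using norm_geometricKernel_sub_cauchyKernel_le hl0 hl1 (abs_le.2 ht)
    _ = (2 * π) ^ (1 / s) * 15 := by rw [periodNorm_const (by linarith)]; norm_num
    _ ≤ 95 := by linarith [pi_lt_d4]

lemma periodNorm_geometricKernel_add_sub_le (hs : 0 < s) (hα : 0 < α) (hr : 0 < r) (hn : 0 < n)
    (hl1 : decayRate α r n ≤ 1 / 100) {h : ℝ} (hh : |h| ≤ π / n) :
    periodNorm s (fun t => geometricKernel (decayRate α r n) (t + h) -
        geometricKernel (decayRate α r n) t) ≤
      20 * linearizationError α r n * periodNorm s (cauchyKernel (decayRate α r n)) := by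
  have hn' : (0 : ℝ) < n := Nat.cast_pos.2 hn
  have hl0 := decayRate_pos hα hr hn'
  have hε := linearizationError_pos hα hr hn'
  have hcont := continuous_geometricKernel hl0
  have hstep : |h| / (0.99 * decayRate α r n) ≤ 4 * linearizationError α r n := by
    rw [div_le_iff₀ (by positivity), linearizationError]
    calc |h| ≤ π / n := hh
      _ ≤ 3.96 / n := by gcongr; linarith [pi_lt_d2]
      _ = _ := by field_simp; norm_num
  refine periodNorm_le_const_mul hs (by positivity)
    ((hcont.comp (continuous_add_const h)).sub hcont) (continuous_cauchyKernel hl0) fun t ht => ?_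
  calc _ ≤ |h| / (0.99 * decayRate α r n) * ‖geometricKernel (decayRate α r n) t‖ :=
        norm_geometricKernel_add_sub_le hl0 hl1 t h
    _ ≤ 4 * linearizationError α r n * (5 * ‖cauchyKernel (decayRate α r n) t‖) := by
        gcongr
        exact norm_geometricKernel_le hl0 hl1 (abs_le.2 ht)
    _ = _ := by ring

lemma periodNorm_tailSeries_add_sub_le (hs : 1 ≤ s) (hα : 0 < α) (hr0 : 0 < r) (hr1 : r ≤ 1)
    (hn : 0 < n) (hl1 : decayRate α r n ≤ 1 / 100) (hN : 8 ≤ decayRate α r n * n) {h : ℝ}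
    (hh : |h| ≤ π / n) :
    periodNorm s (fun t => tailSeries α r n (t + h) - tailSeries α r n t) ≤
      340 * linearizationError α r n * periodNorm s (cauchyKernel (decayRate α r n)) := by
  set G := geometricKernel (decayRate α r n)
  set D := fun t => tailSeries α r n t - G t with hD
  have hGc : Continuous G := continuous_geometricKernel (decayRate_pos hα hr0 (Nat.cast_pos.2 hn))
  have hDc : Continuous D := (continuous_tailSeries hα hr0 n).sub hGc
  have hshift := continuous_add_const h
  have hper : Function.Periodic D (2 * π) :=
    (tailSeries_periodic α r n).sub (geometricKernel_periodic _)
  have hDle := periodNorm_tailSeries_sub_geometricKernel_le (by linarith : 0 < s) hα hr0 hr1 hn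
    (by linarith) hN
  have hGle := periodNorm_geometricKernel_add_sub_le (by linarith : 0 < s) hα hr0 hn hl1 hh
  calc periodNorm s (fun t => tailSeries α r n (t + h) - tailSeries α r n t)
      = periodNorm s (fun t => (D (t + h) + (G (t + h) - G t)) + -D t) :=
        congrArg _ (by ext t; simp only [hD]; ring)
    _ ≤ periodNorm s (fun t => D (t + h)) + periodNorm s (fun t => G (t + h) - G t) +
          periodNorm s (fun t => -D t) := by
        refine (periodNorm_add_le hs ((hDc.comp hshift).add ((hGc.comp hshift).sub hGc))
          hDc.neg).trans (add_le_add_left ?_ _)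
        exact periodNorm_add_le hs (hDc.comp hshift) ((hGc.comp hshift).sub hGc)
    _ = periodNorm s D + periodNorm s (fun t => G (t + h) - G t) + periodNorm s D := by
        rw [periodNorm_comp_add_right hper, periodNorm_congr fun t => norm_neg (D t)]
    _ ≤ _ := by linarith

lemma abs_periodNorm_tailSeries_sub_le (hs : 1 ≤ s) (hα : 0 < α) (hr0 : 0 < r) (hr1 : r ≤ 1)
    (hn : 0 < n) (hl1 : decayRate α r n ≤ 1 / 100) (hN : 8 ≤ decayRate α r n * n) :
    |periodNorm s (tailSeries α r n) - periodNorm s (cauchyKernel (decayRate α r n))| ≤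
      160 * linearizationError α r n * periodNorm s (cauchyKernel (decayRate α r n)) + 95 := by
  have hl0 := decayRate_pos hα hr0 (Nat.cast_pos.2 hn)
  refine (abs_sub_le _ (periodNorm s (geometricKernel (decayRate α r n))) _).trans
    (add_le_add ?_ ?_)
  · exact (abs_periodNorm_sub_le hs (continuous_tailSeries hα hr0 n)
      (continuous_geometricKernel hl0)).trans
      (periodNorm_tailSeries_sub_geometricKernel_le (by linarith) hα hr0 hr1 hn (by linarith) hN)
  · exact (abs_periodNorm_sub_le hs (continuous_geometricKernel hl0)
      (continuous_cauchyKernel hl0)).trans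
      (periodNorm_geometricKernel_sub_cauchyKernel_le hs hl0 hl1)

theorem abs_periodNorm_modulatedRe_tailSeries_sub_le (hs : 1 ≤ s) (hα : 0 < α) (hr0 : 0 < r)
    (hr1 : r ≤ 1) (hn : 0 < n) (hl1 : decayRate α r n ≤ 1 / 100) (hN : 8 ≤ decayRate α r n * n)
    (c : ℝ) :
    |periodNorm s (modulatedRe n c (tailSeries α r n)) -
        cosMean s * periodNorm s (cauchyKernel (decayRate α r n))| ≤
      500 * linearizationError α r n * periodNorm s (cauchyKernel (decayRate α r n)) + 95 := by
  have havg := abs_periodNorm_modulatedRe_sub_cosMean_mul_le hs (continuous_tailSeries hα hr0 n)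
    (tailSeries_periodic α r n) hn c
    fun h => periodNorm_tailSeries_add_sub_le hs hα hr0 hr1 hn hl1 hN
  have hcompare : |cosMean s * periodNorm s (tailSeries α r n) -
      cosMean s * periodNorm s (cauchyKernel (decayRate α r n))| ≤
      160 * linearizationError α r n * periodNorm s (cauchyKernel (decayRate α r n)) + 95 := by
    rw [← mul_sub, abs_mul, abs_of_nonneg (cosMean_nonneg s)]
    exact (mul_le_of_le_one_left (abs_nonneg _) (cosMean_le_one (by linarith))).trans
      (abs_periodNorm_tailSeries_sub_le hs hα hr0 hr1 hn hl1 hN)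
  refine (abs_sub_le _ (cosMean s * periodNorm s (tailSeries α r n)) _).trans ?_
  linarith

end TailSeriesNorm

/-! ### The norm of the Cauchy kernel -/

/-- The `s`-th power integral of the Cauchy kernel `1 / (1 - it)` over the half-line. -/
noncomputable def cauchyPowerIntegral (s : ℝ) : ℝ :=
  ∫ t in Set.Ioi (0 : ℝ), ((t ^ 2 + 1) ^ (s / 2))⁻¹

section CauchyNorm

variable {l s p : ℝ}

lemma integrable_inv_sq_add_one_rpow (hs : 1 < s) :
    Integrable fun t : ℝ => ((t ^ 2 + 1) ^ (s / 2))⁻¹ := by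
  refine (integrable_rpow_neg_one_add_norm_sq (E := ℝ) (μ := volume) (r := s)
    (by simpa using hs)).congr (.of_forall fun t => ?_)
  simp only [norm_eq_abs, sq_abs]
  rw [add_comm, neg_div, rpow_neg (by positivity)]

lemma cauchyPowerIntegral_nonneg (s : ℝ) : 0 ≤ cauchyPowerIntegral s :=
  setIntegral_nonneg measurableSet_Ioi fun t _ => by positivity

lemma setIntegral_Ioi_inv_sq_add_sq_rpow_le (hs : 1 < s) {a : ℝ} (ha : 0 < a) (c : ℝ) :
    ∫ t in Set.Ioi a, ((t ^ 2 + c ^ 2) ^ (s / 2))⁻¹ ≤ a ^ (1 - s) / (s - 1) := by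
  have hpow : ∫ t in Set.Ioi a, t ^ (-s) = a ^ (1 - s) / (s - 1) := by
    rw [integral_Ioi_rpow_of_lt (by linarith) ha, ← neg_sub s 1, neg_add_eq_sub, ← neg_sub s 1,
      neg_div_neg_eq]
  rw [← hpow]
  refine integral_mono_of_nonneg (.of_forall fun t => by positivity)
    (integrableOn_Ioi_rpow_of_lt (by linarith) ha) ?_
  filter_upwards [ae_restrict_mem measurableSet_Ioi] with t ht
  have ht0 : 0 < t := ha.trans ht
  have hsq : t ^ s = (t ^ 2) ^ (s / 2) := by
    rw [← rpow_natCast_mul ht0.le]; congr 1; push_cast; ring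
  rw [rpow_neg ht0.le, hsq]
  gcongr
  linarith [sq_nonneg c]

lemma cauchyPowerIntegral_le (hs : 1 < s) : cauchyPowerIntegral s ≤ s / (s - 1) := by
  have hint := integrable_inv_sq_add_one_rpow hs
  have hfar := setIntegral_Ioi_inv_sq_add_sq_rpow_le hs one_pos 1
  have hnear : ∫ t in Set.Ioc (0 : ℝ) 1, ((t ^ 2 + 1) ^ (s / 2))⁻¹ ≤ ∫ _ in Set.Ioc (0 : ℝ) 1, 1 :=
    setIntegral_mono hint.integrableOn (by simp) fun t =>
      inv_le_one_of_one_le₀ (one_le_rpow (by linarith [sq_nonneg t]) (by linarith))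
  simp only [one_pow, one_rpow] at hfar
  simp only [setIntegral_const, volume_real_Ioc, sub_zero, zero_le_one, sup_of_le_left, smul_eq_mul,
    mul_one] at hnear
  rw [cauchyPowerIntegral, ← Set.Ioc_union_Ioi_eq_Ioi (zero_le_one' ℝ), setIntegral_union
    (Set.Ioc_disjoint_Ioi le_rfl) measurableSet_Ioi hint.integrableOn hint.integrableOn]
  calc _ ≤ 1 + 1 / (s - 1) := add_le_add hnear hfar
    _ = s / (s - 1) := by field_simp [sub_ne_zero.2 hs.ne']; ring

lemma pi_div_two_le_cauchyPowerIntegral (hs1 : 1 < s) (hs2 : s ≤ 2) :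
    π / 2 ≤ cauchyPowerIntegral s := by
  have harctan : π / 2 = ∫ t in Set.Ioi (0 : ℝ), (1 + t ^ 2)⁻¹ := by
    rw [integral_Ioi_inv_one_add_sq, arctan_zero, sub_zero]
  rw [harctan]
  refine setIntegral_mono integrable_inv_one_add_sq.integrableOn
    (integrable_inv_sq_add_one_rpow hs1).integrableOn fun t => ?_
  dsimp only
  rw [add_comm]
  gcongr
  exact rpow_le_self_of_one_le (by linarith [sq_nonneg t]) (by linarith)

lemma norm_cauchyKernel_rpow (l t s : ℝ) :
    ‖cauchyKernel l t‖ ^ s = ((t ^ 2 + l ^ 2) ^ (s / 2))⁻¹ := by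
  have hnorm : ‖(l : ℂ) - t * Complex.I‖ = √(t ^ 2 + l ^ 2) := by
    rw [Complex.norm_def, Complex.normSq_apply, ofReal_sub_mul_I_re, ofReal_sub_mul_I_im]
    congr 1
    ring
  rw [cauchyKernel, norm_inv, hnorm, inv_rpow (sqrt_nonneg _), sqrt_eq_rpow,
    ← rpow_mul (by positivity), one_div_mul_eq_div]

lemma inv_sq_add_sq_rpow_eq (hl : 0 < l) (s t : ℝ) :
    ((t ^ 2 + l ^ 2) ^ (s / 2))⁻¹ = l ^ (-s) * (((l⁻¹ * t) ^ 2 + 1) ^ (s / 2))⁻¹ := by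
  have hfactor : t ^ 2 + l ^ 2 = l ^ 2 * ((l⁻¹ * t) ^ 2 + 1) := by field_simp
  rw [hfactor, mul_rpow (by positivity) (by positivity), mul_inv, rpow_neg hl.le,
    ← rpow_natCast_mul hl.le]
  congr 3
  push_cast
  ring

lemma integrable_inv_sq_add_sq_rpow (hs : 1 < s) (hl : 0 < l) :
    Integrable fun t : ℝ => ((t ^ 2 + l ^ 2) ^ (s / 2))⁻¹ := by
  simp_rw [inv_sq_add_sq_rpow_eq hl]
  exact ((integrable_inv_sq_add_one_rpow hs).comp_mul_left' (inv_ne_zero hl.ne')).const_mul _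

lemma setIntegral_Ioi_inv_sq_add_sq_rpow (hl : 0 < l) (s : ℝ) :
    ∫ t in Set.Ioi (0 : ℝ), ((t ^ 2 + l ^ 2) ^ (s / 2))⁻¹ =
      l ^ (1 - s) * cauchyPowerIntegral s := by
  simp_rw [inv_sq_add_sq_rpow_eq hl]
  rw [integral_const_mul, integral_comp_mul_left_Ioi (fun t => ((t ^ 2 + 1) ^ (s / 2))⁻¹) 0
    (inv_pos.2 hl), mul_zero, inv_inv, smul_eq_mul, ← mul_assoc, cauchyPowerIntegral,
    ← rpow_add_one hl.ne', neg_add_eq_sub]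

lemma periodNorm_cauchyKernel_rpow_add (hs : 1 < s) (hl : 0 < l) :
    periodNorm s (cauchyKernel l) ^ s + 2 * ∫ t in Set.Ioi π, ((t ^ 2 + l ^ 2) ^ (s / 2))⁻¹ =
      2 * (l ^ (1 - s) * cauchyPowerIntegral s) := by
  have hint := integrable_inv_sq_add_sq_rpow hs hl
  have heven : ∫ t in (-π)..π, ((t ^ 2 + l ^ 2) ^ (s / 2))⁻¹ =
      2 * ∫ t in (0 : ℝ)..π, ((t ^ 2 + l ^ 2) ^ (s / 2))⁻¹ := by
    have hneg := intervalIntegral.integral_comp_neg (a := 0) (b := π)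
      (fun t => ((t ^ 2 + l ^ 2) ^ (s / 2))⁻¹)
    simp only [neg_sq, neg_zero] at hneg
    rw [← intervalIntegral.integral_add_adjacent_intervals (b := 0) hint.intervalIntegrable
      hint.intervalIntegrable, ← hneg, two_mul]
  rw [periodNorm_rpow (by linarith), ← setIntegral_Ioi_inv_sq_add_sq_rpow hl,
    ← Set.Ioc_union_Ioi_eq_Ioi pi_pos.le, setIntegral_union (Set.Ioc_disjoint_Ioi le_rfl)
    measurableSet_Ioi hint.integrableOn hint.integrableOn,
    ← intervalIntegral.integral_of_le pi_pos.le, mul_add, ← heven]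
  simp_rw [norm_cauchyKernel_rpow]

lemma rpow_add_sub_rpow_le {x b q : ℝ} (hx : 0 ≤ x) (hb : 0 ≤ b) (hxb : 0 < x + b)
    (hq : q ≤ 1) : (x + b) ^ q - x ^ q ≤ (x + b) ^ (q - 1) * b := by
  have hratio : x / (x + b) ≤ (x / (x + b)) ^ q :=
    self_le_rpow_of_le_one (by positivity) ((div_le_one hxb).2 (by linarith)) hq
  rw [div_rpow hx hxb.le, div_le_div_iff₀ hxb (by positivity)] at hratio
  rw [rpow_sub_one hxb.ne', div_mul_eq_mul_div, le_div_iff₀ hxb]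
  linarith

lemma scaled_cauchyPowerIntegral_rpow (hps : p.HolderConjugate s) (hl : 0 < l) :
    (2 * (l ^ (1 - s) * cauchyPowerIntegral s)) ^ (1 / s) =
      l ^ (-(1 / p)) * (2 * cauchyPowerIntegral s) ^ (1 / s) := by
  have hexp : (1 - s) * (1 / s) = -(1 / p) := by
    have hs := hps.symm.ne_zero
    rw [one_div p, ← hps.symm.one_sub_inv]
    field_simp
    ring
  rw [mul_left_comm, mul_rpow (by positivity)
    (mul_nonneg two_pos.le (cauchyPowerIntegral_nonneg s)), ← rpow_mul hl.le, hexp]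

lemma setIntegral_Ioi_pi_nonneg (l s : ℝ) :
    0 ≤ ∫ t in Set.Ioi π, ((t ^ 2 + l ^ 2) ^ (s / 2))⁻¹ :=
  setIntegral_nonneg measurableSet_Ioi fun t _ => by positivity

lemma periodNorm_rpow_rpow_one_div {E : Type*} [NormedAddCommGroup E] (hs : s ≠ 0) (F : ℝ → E) :
    (periodNorm s F ^ s) ^ (1 / s) = periodNorm s F := by
  rw [← rpow_mul (periodNorm_nonneg s F), mul_one_div_cancel hs, rpow_one]

lemma periodNorm_cauchyKernel_le_scaled (hps : p.HolderConjugate s) (hl : 0 < l) :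
    periodNorm s (cauchyKernel l) ≤ l ^ (-(1 / p)) * (2 * cauchyPowerIntegral s) ^ (1 / s) := by
  have hpyth := periodNorm_cauchyKernel_rpow_add hps.symm.lt hl
  rw [← scaled_cauchyPowerIntegral_rpow hps hl,
    ← periodNorm_rpow_rpow_one_div hps.symm.ne_zero (cauchyKernel l)]
  exact rpow_le_rpow (rpow_nonneg (periodNorm_nonneg _ _) _)
    (by linarith [setIntegral_Ioi_pi_nonneg l s]) hps.symm.one_div_nonneg

lemma periodNorm_cauchyKernel_le (hps : p.HolderConjugate s) (hl : 0 < l) :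
    periodNorm s (cauchyKernel l) ≤ 2 * (l ^ (-(1 / p)) * p ^ (1 / s)) := by
  have hs0 := hps.symm.pos
  have hIp : cauchyPowerIntegral s ≤ p :=
    (cauchyPowerIntegral_le hps.symm.lt).trans_eq hps.symm.conjugate_eq.symm
  have hI0 := cauchyPowerIntegral_nonneg s
  have htwo : (2 : ℝ) ^ (1 / s) ≤ 2 :=
    rpow_le_self_of_one_le one_le_two ((div_le_one hs0).2 hps.symm.lt.le)
  calc periodNorm s (cauchyKernel l)
      ≤ l ^ (-(1 / p)) * (2 * cauchyPowerIntegral s) ^ (1 / s) :=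
        periodNorm_cauchyKernel_le_scaled hps hl
    _ ≤ l ^ (-(1 / p)) * (2 * p ^ (1 / s)) := by
        rw [mul_rpow two_pos.le hI0]; gcongr
    _ = _ := by ring

lemma scaled_sub_periodNorm_cauchyKernel_le_one (hps : p.HolderConjugate s) (hs2 : 2 ≤ s)
    (hl : 0 < l) : l ^ (-(1 / p)) * (2 * cauchyPowerIntegral s) ^ (1 / s) -
      periodNorm s (cauchyKernel l) ≤ 1 := by
  have hs0 := hps.symm.pos
  have hN0 := rpow_nonneg (periodNorm_nonneg s (cauchyKernel l)) s
  have htail0 := setIntegral_Ioi_pi_nonneg l s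
  have htail : 2 * ∫ t in Set.Ioi π, ((t ^ 2 + l ^ 2) ^ (s / 2))⁻¹ ≤ 1 := by
    have hpi : π ^ (1 - s) ≤ 1 / 2 :=
      calc π ^ (1 - s) ≤ π ^ (-1 : ℝ) :=
            rpow_le_rpow_of_exponent_le (by linarith [pi_gt_three]) (by linarith)
        _ = π⁻¹ := rpow_neg_one _
        _ ≤ 1 / 2 := by rw [one_div]; gcongr; exact two_le_pi
    have hdiv : π ^ (1 - s) / (s - 1) ≤ 1 / 2 / 1 := by gcongr; linarith
    linarith [setIntegral_Ioi_inv_sq_add_sq_rpow_le hps.symm.lt pi_pos l]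
  have hsub := rpow_add_le_add_rpow hN0 (mul_nonneg two_pos.le htail0) hps.symm.one_div_nonneg
    ((div_le_one hs0).2 hps.symm.lt.le)
  rw [periodNorm_cauchyKernel_rpow_add hps.symm.lt hl, scaled_cauchyPowerIntegral_rpow hps hl,
    periodNorm_rpow_rpow_one_div hs0.ne'] at hsub
  linarith [rpow_le_one (mul_nonneg two_pos.le htail0) htail hps.symm.one_div_nonneg]

lemma scaled_sub_periodNorm_cauchyKernel_le (hps : p.HolderConjugate s) (hs2 : s ≤ 2)
    (hl : 0 < l) : l ^ (-(1 / p)) * (2 * cauchyPowerIntegral s) ^ (1 / s) -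
      periodNorm s (cauchyKernel l) ≤ 2 * (1 / (s - 1) * l ^ ((s - 1) / p)) := by
  have hs1 := hps.symm.lt
  have := hps.symm.sub_one_pos
  have hN0 := rpow_nonneg (periodNorm_nonneg s (cauchyKernel l)) s
  have hpyth := periodNorm_cauchyKernel_rpow_add hs1 hl
  have htail0 := mul_nonneg two_pos.le (setIntegral_Ioi_pi_nonneg l s)
  have htail : 2 * ∫ t in Set.Ioi π, ((t ^ 2 + l ^ 2) ^ (s / 2))⁻¹ ≤ 2 * (1 / (s - 1)) := by
    refine mul_le_mul_of_nonneg_left ?_ two_pos.le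
    refine (setIntegral_Ioi_inv_sq_add_sq_rpow_le hs1 pi_pos l).trans ?_
    gcongr
    exact rpow_le_one_of_one_le_of_nonpos (by linarith [pi_gt_three]) (by linarith)
  have hmain : l ^ (1 - s) ≤ 2 * (l ^ (1 - s) * cauchyPowerIntegral s) := by
    nlinarith [rpow_pos_of_pos hl (1 - s), pi_div_two_le_cauchyPowerIntegral hs1 hs2, pi_gt_three]
  have hpow : (2 * (l ^ (1 - s) * cauchyPowerIntegral s)) ^ (1 / s - 1) ≤ l ^ ((s - 1) / p) := by
    have hexp : 1 / s - 1 = -(1 / p) := by rw [one_div, one_div, hps.symm.inv_sub_one]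
    calc _ ≤ (l ^ (1 - s)) ^ (1 / s - 1) := rpow_le_rpow_of_nonpos (by positivity) hmain
          (by rw [hexp]; exact neg_nonpos.2 hps.one_div_nonneg)
      _ = _ := by rw [hexp, ← rpow_mul hl.le]; congr 1; ring
  have hsub := rpow_add_sub_rpow_le hN0 htail0
    (by rw [hpyth]; exact (rpow_pos_of_pos hl _).trans_le hmain)
    ((div_le_one hps.symm.pos).2 hs1.le)
  rw [hpyth, scaled_cauchyPowerIntegral_rpow hps hl,
    periodNorm_rpow_rpow_one_div hps.symm.ne_zero] at hsub
  calc _ ≤ _ := hsub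
    _ ≤ l ^ ((s - 1) / p) * (2 * (1 / (s - 1))) := by gcongr
    _ = _ := by ring

theorem abs_periodNorm_cauchyKernel_sub_scaled_le (hps : p.HolderConjugate s) (hl : 0 < l) :
    |periodNorm s (cauchyKernel l) - l ^ (-(1 / p)) * (2 * cauchyPowerIntegral s) ^ (1 / s)| ≤
      2 * (1 / (s - 1) * l ^ ((s - 1) / p)) + 1 := by
  have hs1 := hps.symm.sub_one_pos
  have hnonneg : 0 ≤ 1 / (s - 1) * l ^ ((s - 1) / p) := by positivity
  rw [abs_sub_comm, abs_of_nonneg (sub_nonneg.2 (periodNorm_cauchyKernel_le_scaled hps hl))]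
  rcases le_total 2 s with hs2 | hs2
  · linarith [scaled_sub_periodNorm_cauchyKernel_le_one hps hs2 hl]
  · linarith [scaled_sub_periodNorm_cauchyKernel_le hps hs2 hl]

end CauchyNorm

/-! ### Fourier sums of absolutely convergent trigonometric series -/

lemma integral_cos_int_mul_add (j : ℤ) (θ : ℝ) :
    ∫ t in (-π)..π, cos (j * t + θ) = if j = 0 then 2 * π * cos θ else 0 := by
  split_ifs with hj
  · simp only [hj, Int.cast_zero, zero_mul, zero_add, intervalIntegral.integral_const, smul_eq_mul]
    ring
  · have hj' : (j : ℝ) ≠ 0 := mod_cast hj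
    have hends : sin (j * π + θ) = sin (j * -π + θ) := by
      rw [← sin_add_int_mul_two_pi (j * -π + θ) j]
      ring_nf
    rw [intervalIntegral.integral_comp_mul_add (fun t => cos t) hj', integral_cos, hends, sub_self,
      smul_zero]

lemma integral_cos_nat_mul_add_mul_cos {k : ℕ} (hk : k ≠ 0) (j : ℕ) (a b : ℝ) :
    ∫ t in (-π)..π, cos (k * t + a) * cos (j * t + b) = if k = j then π * cos (a - b) else 0 := by
  have hprod (t : ℝ) : cos (k * t + a) * cos (j * t + b) =
      2⁻¹ * (cos (((k - j : ℤ) : ℝ) * t + (a - b)) + cos (((k + j : ℤ) : ℝ) * t + (a + b))) := by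
    have hsub : ((k - j : ℤ) : ℝ) * t + (a - b) = k * t + a - (j * t + b) := by push_cast; ring
    have hadd : ((k + j : ℤ) : ℝ) * t + (a + b) = k * t + a + (j * t + b) := by push_cast; ring
    rw [hsub, hadd, ← two_mul_cos_mul_cos]
    ring
  have hint (c θ : ℝ) : IntervalIntegrable (fun t => cos (c * t + θ)) volume (-π) π :=
    Continuous.intervalIntegrable (by fun_prop) _ _
  simp_rw [hprod]
  rw [intervalIntegral.integral_const_mul, intervalIntegral.integral_add (hint _ _) (hint _ _),
    integral_cos_int_mul_add, integral_cos_int_mul_add, if_neg (by omega : (k + j : ℤ) ≠ 0)]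
  simp only [sub_eq_zero, Nat.cast_inj]
  split_ifs <;> ring

/-- The harmonic of order `k + 1`, with cosine and sine amplitudes `u k` and `v k`. -/
noncomputable def trigTerm (u v : ℕ → ℝ) (k : ℕ) (x : ℝ) : ℝ :=
  u k * cos ((k + 1) * x) + v k * sin ((k + 1) * x)

lemma continuous_trigTerm (u v : ℕ → ℝ) (k : ℕ) : Continuous (trigTerm u v k) := by
  unfold trigTerm
  fun_prop

lemma norm_trigTerm_le (u v : ℕ → ℝ) (k : ℕ) (x : ℝ) : ‖trigTerm u v k x‖ ≤ |u k| + |v k| := by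
  refine (norm_add_le _ _).trans (add_le_add ?_ ?_) <;> rw [norm_mul]
  · exact mul_le_of_le_one_right (abs_nonneg _) (abs_cos_le_one _)
  · exact mul_le_of_le_one_right (abs_nonneg _) (abs_sin_le_one _)

lemma integral_trigTerm_mul_cos (u v : ℕ → ℝ) (k j : ℕ) (b : ℝ) :
    ∫ t in (-π)..π, trigTerm u v k t * cos (j * t + b) =
      if k + 1 = j then π * (u k * cos b - v k * sin b) else 0 := by
  have hterm (t : ℝ) : trigTerm u v k t * cos (j * t + b) =
      u k * (cos ((k + 1 : ℕ) * t + 0) * cos (j * t + b)) +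
        v k * (cos ((k + 1 : ℕ) * t + -(π / 2)) * cos (j * t + b)) := by
    rw [← sub_eq_add_neg _ (π / 2), cos_sub_pi_div_two, add_zero, trigTerm]
    push_cast
    ring
  have hint (a : ℝ) : IntervalIntegrable
      (fun t => cos ((k + 1 : ℕ) * t + a) * cos (j * t + b)) volume (-π) π :=
    Continuous.intervalIntegrable (by fun_prop) _ _
  have hphase : cos (-(π / 2) - b) = -sin b := by
    rw [← cos_neg, neg_sub, sub_neg_eq_add, cos_add_pi_div_two]
  simp_rw [hterm]
  rw [intervalIntegral.integral_add ((hint _).const_mul _) ((hint _).const_mul _),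
    intervalIntegral.integral_const_mul, intervalIntegral.integral_const_mul,
    integral_cos_nat_mul_add_mul_cos k.succ_ne_zero, integral_cos_nat_mul_add_mul_cos
    k.succ_ne_zero, hphase, zero_sub, cos_neg]
  split_ifs <;> ring

section TrigSeries

variable {u v : ℕ → ℝ}

lemma summable_trigTerm (hu : Summable fun k => |u k|) (hv : Summable fun k => |v k|) (x : ℝ) :
    Summable fun k => trigTerm u v k x :=
  .of_norm_bounded (hu.add hv) fun k => norm_trigTerm_le u v k x

lemma continuous_tsum_trigTerm (hu : Summable fun k => |u k|) (hv : Summable fun k => |v k|) :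
    Continuous fun x => ∑' k, trigTerm u v k x :=
  continuous_tsum (continuous_trigTerm u v) (hu.add hv) (norm_trigTerm_le u v)

lemma integral_tsum_trigTerm_mul_cos (hu : Summable fun k => |u k|)
    (hv : Summable fun k => |v k|) (j : ℕ) (b : ℝ) :
    ∫ t in (-π)..π, (∑' k, trigTerm u v k t) * cos (j * t + b) =
      ∑' k, if k + 1 = j then π * (u k * cos b - v k * sin b) else 0 := by
  have h := intervalIntegral.hasSum_integral_of_dominated_convergence (μ := volume)
    (a := -π) (b := π) (F := fun k t => trigTerm u v k t * cos (j * t + b))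
    (f := fun t => (∑' k, trigTerm u v k t) * cos (j * t + b))
    (fun k _ => |u k| + |v k|)
    (fun k => ((continuous_trigTerm u v k).mul (by fun_prop)).aestronglyMeasurable)
    (fun k => .of_forall fun t _ => ?_) (.of_forall fun t _ => hu.add hv) (by simp)
    (.of_forall fun t _ => (summable_trigTerm hu hv t).hasSum.mul_right _)
  · rw [← h.tsum_eq]
    exact tsum_congr fun k => integral_trigTerm_mul_cos u v k j b
  · rw [norm_mul]
    exact (mul_le_of_le_one_right (norm_nonneg _) (abs_cos_le_one _)).trans
      (norm_trigTerm_le u v k t)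

variable {A : ℝ} {f : ℝ → ℝ}

lemma integral_mul_cos_of_eq_trigSeries (hu : Summable fun k => |u k|)
    (hv : Summable fun k => |v k|) (hf : ∀ x, f x = A / 2 + ∑' k, trigTerm u v k x)
    (j : ℕ) (b : ℝ) :
    ∫ t in (-π)..π, f t * cos (j * t + b) = (if j = 0 then π * A * cos b else 0) +
      ∑' k, if k + 1 = j then π * (u k * cos b - v k * sin b) else 0 := by
  have hconst := integral_cos_int_mul_add j b
  simp only [Int.cast_natCast, Nat.cast_eq_zero] at hconst
  simp_rw [hf, add_mul]
  rw [intervalIntegral.integral_add, integral_tsum_trigTerm_mul_cos hu hv,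
    intervalIntegral.integral_const_mul, hconst]
  · congr 1
    split_ifs <;> ring
  · exact Continuous.intervalIntegrable (by fun_prop) _ _
  · exact ((continuous_tsum_trigTerm hu hv).mul (by fun_prop)).intervalIntegrable _ _

lemma fourierCoefA_zero_of_eq_trigSeries (hu : Summable fun k => |u k|)
    (hv : Summable fun k => |v k|) (hf : ∀ x, f x = A / 2 + ∑' k, trigTerm u v k x) :
    fourierCoefA f 0 = A := by
  have h := integral_mul_cos_of_eq_trigSeries hu hv hf 0 0
  simp only [add_zero, if_true, cos_zero, mul_one, Nat.add_eq_zero_iff, one_ne_zero, and_false,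
    if_false, tsum_zero] at h
  rw [fourierCoefA, h]
  field_simp

lemma fourierCoefA_succ_of_eq_trigSeries (hu : Summable fun k => |u k|)
    (hv : Summable fun k => |v k|) (hf : ∀ x, f x = A / 2 + ∑' k, trigTerm u v k x) (j : ℕ) :
    fourierCoefA f (j + 1) = u j := by
  have h := integral_mul_cos_of_eq_trigSeries hu hv hf (j + 1) 0
  simp only [add_zero, Nat.add_eq_zero_iff, one_ne_zero, and_false, if_false, add_left_inj,
    tsum_ite_eq, cos_zero, sin_zero, mul_one, mul_zero, sub_zero, zero_add] at h
  rw [fourierCoefA, h]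
  field_simp

lemma fourierCoefB_succ_of_eq_trigSeries (hu : Summable fun k => |u k|)
    (hv : Summable fun k => |v k|) (hf : ∀ x, f x = A / 2 + ∑' k, trigTerm u v k x) (j : ℕ) :
    fourierCoefB f (j + 1) = v j := by
  have h := integral_mul_cos_of_eq_trigSeries hu hv hf (j + 1) (-(π / 2))
  simp only [← sub_eq_add_neg _ (π / 2), cos_sub_pi_div_two, Nat.add_eq_zero_iff, one_ne_zero,
    and_false, if_false, add_left_inj, tsum_ite_eq, cos_neg, cos_pi_div_two, sin_neg,
    sin_pi_div_two, mul_zero, zero_sub, mul_neg, mul_one, neg_neg, zero_add] at h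
  rw [fourierCoefB, h]
  field_simp

lemma sub_fourierSum_of_eq_trigSeries (hu : Summable fun k => |u k|)
    (hv : Summable fun k => |v k|) (hf : ∀ x, f x = A / 2 + ∑' k, trigTerm u v k x)
    (m : ℕ) (x : ℝ) :
    f x - fourierSum m f x = ∑' k, trigTerm u v (k + m) x := by
  have hsum : fourierSum m f x = A / 2 + ∑ k ∈ Finset.range m, trigTerm u v k x := by
    rw [fourierSum, fourierCoefA_zero_of_eq_trigSeries hu hv hf, ← Finset.Ico_add_one_right_eq_Icc,
      Finset.sum_Ico_eq_sum_range]
    refine congrArg _ (Finset.sum_congr rfl fun k _ => ?_)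
    rw [add_comm 1 k, fourierCoefA_succ_of_eq_trigSeries hu hv hf,
      fourierCoefB_succ_of_eq_trigSeries hu hv hf, trigTerm]
    push_cast
    ring
  rw [hsum, hf, ← (summable_trigTerm hu hv x).sum_add_tsum_nat_add m]
  ring

end TrigSeries

section Convolution

variable {φ : ℝ → ℝ} {a : ℕ → ℝ}

lemma integral_norm_mul_le_of_abs_le_one (hφ : IntervalIntegrable φ volume (-π) π) {w : ℝ → ℝ}
    (hw : Continuous w) (hw1 : ∀ t, |w t| ≤ 1) :
    ∫ t in (-π)..π, ‖w t * φ t‖ ≤ ∫ t in (-π)..π, ‖φ t‖ := by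
  refine intervalIntegral.integral_mono_on neg_pi_le_pi
    (hφ.continuousOn_mul hw.continuousOn).norm hφ.norm fun t _ => ?_
  rw [norm_mul]
  exact mul_le_of_le_one_left (norm_nonneg _) (hw1 t)

lemma summable_abs_mul_integral (ha : Summable fun k => |a k|)
    (hφ : IntervalIntegrable φ volume (-π) π) {w : ℕ → ℝ → ℝ} (hw : ∀ k, Continuous (w k))
    (hw1 : ∀ k t, |w k t| ≤ 1) :
    Summable fun k => |a k * ∫ t in (-π)..π, w k t * φ t| := by
  refine .of_nonneg_of_le (fun k => abs_nonneg _) (fun k => ?_)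
    (ha.mul_right (∫ t in (-π)..π, ‖φ t‖))
  rw [abs_mul]
  gcongr
  exact (intervalIntegral.norm_integral_le_integral_norm neg_pi_le_pi).trans
    (integral_norm_mul_le_of_abs_le_one hφ (hw k) (hw1 k))

lemma hasSum_mul_integral (ha : Summable fun k => |a k|)
    (hφ : IntervalIntegrable φ volume (-π) π) {w : ℕ → ℝ → ℝ} (hw : ∀ k, Continuous (w k))
    (hw1 : ∀ k t, |w k t| ≤ 1) :
    HasSum (fun k => a k * ∫ t in (-π)..π, w k t * φ t)
      (∫ t in (-π)..π, (∑' k, a k * w k t) * φ t) := by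
  have hint (k : ℕ) : IntervalIntegrable (fun t => w k t * φ t) volume (-π) π :=
    hφ.continuousOn_mul (hw k).continuousOn
  have hnorm : Summable fun k => ∫ t in Set.Ioc (-π) π, ‖a k * (w k t * φ t)‖ := by
    refine .of_nonneg_of_le (fun k => integral_nonneg fun _ => norm_nonneg _) (fun k => ?_)
      (ha.mul_right (∫ t in (-π)..π, ‖φ t‖))
    simp_rw [norm_mul (a k)]
    rw [integral_const_mul, ← intervalIntegral.integral_of_le neg_pi_le_pi, norm_eq_abs]
    gcongr
    exact integral_norm_mul_le_of_abs_le_one hφ (hw k) (hw1 k)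
  have h := hasSum_integral_of_summable_integral_norm (fun k => ((hint k).const_mul (a k)).1) hnorm
  simp_rw [integral_const_mul, ← mul_assoc, tsum_mul_right,
    ← intervalIntegral.integral_of_le neg_pi_le_pi] at h
  exact h

lemma integral_cos_mul_sub_mul (hφ : IntervalIntegrable φ volume (-π) π) (ω b x : ℝ) :
    ∫ t in (-π)..π, cos (ω * (x - t) - b) * φ t =
      (∫ t in (-π)..π, cos (ω * t + b) * φ t) * cos (ω * x) +
        (∫ t in (-π)..π, sin (ω * t + b) * φ t) * sin (ω * x) := by
  rw [← intervalIntegral.integral_mul_const, ← intervalIntegral.integral_mul_const,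
    ← intervalIntegral.integral_add]
  · congr 1 with t
    rw [show ω * (x - t) - b = ω * x - (ω * t + b) by ring, cos_sub]
    ring
  · exact (hφ.continuousOn_mul (Continuous.continuousOn (by fun_prop))).mul_const _
  · exact (hφ.continuousOn_mul (Continuous.continuousOn (by fun_prop))).mul_const _

/-- The part of the generalized Poisson kernel made of the harmonics of order greater than `m`;
convolution with it gives the deviation of the Fourier sum of order `m`. -/
noncomputable def kernelTail (α r β : ℝ) (m : ℕ) (t : ℝ) : ℝ :=
  ∑' k : ℕ, exp (-α * ((k + m : ℕ) + 1) ^ r) * cos (((k + m : ℕ) + 1) * t - β * π / 2)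

variable {α r β A : ℝ} {f : ℝ → ℝ}

theorem sub_fourierSum_eq_integral_kernelTail
    (ha : Summable fun k : ℕ => exp (-α * ((k : ℝ) + 1) ^ r))
    (hφ : IntervalIntegrable φ volume (-π) π)
    (hf : ∀ x, f x = A / 2 + 1 / π * ∫ t in (-π)..π, genPoissonKernel α r β (x - t) * φ t)
    (m : ℕ) (x : ℝ) :
    f x - fourierSum m f x = 1 / π * ∫ t in (-π)..π, kernelTail α r β m (x - t) * φ t := by
  set b := β * π / 2 with hb
  set a : ℕ → ℝ := fun k => 1 / π * exp (-α * ((k : ℝ) + 1) ^ r) with ha_def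
  have ha' : Summable fun k => |a k| := (ha.mul_left (1 / π)).abs
  set u : ℕ → ℝ := fun k => a k * ∫ t in (-π)..π, cos ((k + 1) * t + b) * φ t
  set v : ℕ → ℝ := fun k => a k * ∫ t in (-π)..π, sin ((k + 1) * t + b) * φ t
  have hu : Summable fun k => |u k| :=
    summable_abs_mul_integral ha' hφ (fun k => by fun_prop) fun k t => abs_cos_le_one _
  have hv : Summable fun k => |v k| :=
    summable_abs_mul_integral ha' hφ (fun k => by fun_prop) fun k t => abs_sin_le_one _
  have hterm (k : ℕ) (x : ℝ) : a k * ∫ t in (-π)..π, cos ((k + 1) * (x - t) - b) * φ t =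
      trigTerm u v k x := by
    rw [integral_cos_mul_sub_mul hφ, trigTerm]
    ring
  have htail (m : ℕ) (x : ℝ) : 1 / π * ∫ t in (-π)..π, kernelTail α r β m (x - t) * φ t =
      ∑' k, trigTerm u v (k + m) x := by
    have h := hasSum_mul_integral ((summable_nat_add_iff m).2 ha') hφ
      (w := fun k t => cos (((k + m : ℕ) + 1) * (x - t) - b)) (fun k => by fun_prop)
      fun k t => abs_cos_le_one _
    simp_rw [← hterm, h.tsum_eq, ha_def, mul_assoc (1 / π), tsum_mul_left, mul_assoc (1 / π),
      intervalIntegral.integral_const_mul, kernelTail, hb]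
  refine sub_fourierSum_of_eq_trigSeries hu hv (A := A) (fun y => ?_) m x |>.trans (htail m x).symm
  exact (hf y).trans (congrArg (A / 2 + ·) (htail 0 y))

end Convolution

/-! ### Completely monotone sequences -/

/-- The shift `a ↦ (a (k + 1))_k` on real sequences. -/
def seqShift : Module.End ℝ (ℕ → ℝ) := LinearMap.funLeft ℝ ℝ Nat.succ

/-- The difference operator `a ↦ (a k - a (k + 1))_k`, with the sign that makes every iterate
positive on `y ^ k`, `0 ≤ y ≤ 1`. -/
def seqDiff : Module.End ℝ (ℕ → ℝ) := 1 - seqShift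

/-- All iterated differences are nonnegative (Hausdorff's moment condition). -/
def IsCompletelyMonotone (a : ℕ → ℝ) : Prop := ∀ i k, 0 ≤ (seqDiff ^ i) a k

lemma seqShift_apply (a : ℕ → ℝ) (k : ℕ) : seqShift a k = a (k + 1) := rfl

lemma seqDiff_apply (a : ℕ → ℝ) (k : ℕ) : seqDiff a k = a k - a (k + 1) := rfl

lemma continuous_seqDiff : Continuous seqDiff :=
  continuous_pi fun k => (continuous_apply k).sub (continuous_apply (k + 1))

namespace IsCompletelyMonotone

variable {a b : ℕ → ℝ}

lemma nonneg (ha : IsCompletelyMonotone a) (k : ℕ) : 0 ≤ a k := ha 0 k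

lemma diff (ha : IsCompletelyMonotone a) : IsCompletelyMonotone (seqDiff a) := fun i k => by
  have h := ha (i + 1) k
  rwa [pow_succ, Module.End.mul_apply] at h

lemma shift (ha : IsCompletelyMonotone a) : IsCompletelyMonotone (seqShift a) := fun i k => by
  have hcomm : Commute (seqDiff ^ i) seqShift := ((Commute.one_left _).sub_left rfl).pow_left i
  rw [← Module.End.mul_apply, hcomm.eq]
  exact ha i (k + 1)

lemma comp_add_right (ha : IsCompletelyMonotone a) (m : ℕ) :
    IsCompletelyMonotone fun k => a (k + m) := by
  induction m with
  | zero => exact ha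
  | succ m ih =>
    convert ih.shift using 2 with k
    rw [seqShift_apply, add_right_comm, add_assoc]

lemma add (ha : IsCompletelyMonotone a) (hb : IsCompletelyMonotone b) :
    IsCompletelyMonotone (a + b) := fun i k => by
  rw [map_add]
  exact add_nonneg (ha i k) (hb i k)

lemma smul (ha : IsCompletelyMonotone a) {c : ℝ} (hc : 0 ≤ c) :
    IsCompletelyMonotone (c • a) := fun i k => by
  rw [map_smul]
  exact mul_nonneg hc (ha i k)

lemma zero : IsCompletelyMonotone 0 := fun i k => by rw [map_zero]; rfl

lemma one : IsCompletelyMonotone 1 := fun i k => by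
  cases i with
  | zero => exact zero_le_one
  | succ i =>
    have hdiff : seqDiff 1 = 0 := by ext k; simp [seqDiff_apply]
    rw [pow_succ, Module.End.mul_apply, hdiff]
    exact zero i k

lemma sum {ι : Type*} {a : ι → ℕ → ℝ} {s : Finset ι} (ha : ∀ j ∈ s, IsCompletelyMonotone (a j)) :
    IsCompletelyMonotone (∑ j ∈ s, a j) :=
  Finset.sum_induction a IsCompletelyMonotone (fun _ _ => add) zero ha

lemma mul (ha : IsCompletelyMonotone a) (hb : IsCompletelyMonotone b) :
    IsCompletelyMonotone (a * b) := by
  intro i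
  induction i generalizing a b with
  | zero => exact fun k => mul_nonneg (ha 0 k) (hb 0 k)
  | succ i ih =>
    intro k
    have hleibniz : seqDiff (a * b) = seqDiff a * b + seqShift a * seqDiff b := by
      ext k
      simp only [seqDiff_apply, seqShift_apply, Pi.mul_apply, Pi.add_apply]
      ring
    rw [pow_succ, Module.End.mul_apply, hleibniz, map_add]
    exact add_nonneg (ih ha.diff hb k) (ih ha.shift hb.diff k)

lemma pow (ha : IsCompletelyMonotone a) (j : ℕ) : IsCompletelyMonotone (a ^ j) := by
  induction j with
  | zero => simpa only [pow_zero] using one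
  | succ j ih => simpa only [pow_succ] using ih.mul ha

lemma of_tendsto {ι : Type*} {l : Filter ι} [l.NeBot] {a : ι → ℕ → ℝ}
    (ha : ∀ j, IsCompletelyMonotone (a j)) (h : Tendsto a l (nhds b)) :
    IsCompletelyMonotone b := fun i k => by
  have hcont : Continuous ⇑(seqDiff ^ i) := by
    rw [Module.End.coe_pow]
    exact continuous_seqDiff.iterate i
  exact ge_of_tendsto' (tendsto_pi_nhds.1 ((hcont.tendsto b).comp h) k) fun j => ha j i k

lemma exp (ha : IsCompletelyMonotone a) : IsCompletelyMonotone fun k => Real.exp (a k) := by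
  refine of_tendsto (l := atTop)
    (a := fun N => ∑ j ∈ Finset.range N, (j.factorial : ℝ)⁻¹ • a ^ j)
    (fun N => sum fun j _ => (ha.pow j).smul (by positivity)) (tendsto_pi_nhds.2 fun k => ?_)
  have hexp := (NormedSpace.expSeries_div_hasSum_exp (a k)).tendsto_sum_nat
  rw [← exp_eq_exp_ℝ] at hexp
  refine hexp.congr fun N => ?_
  simp only [Finset.sum_apply, Pi.smul_apply, Pi.pow_apply, smul_eq_mul, div_eq_inv_mul]

lemma integral {Ω : Type*} [MeasurableSpace Ω] {μ : Measure Ω} {a : Ω → ℕ → ℝ}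
    (ha : ∀ᵐ x ∂μ, IsCompletelyMonotone (a x)) (hint : ∀ k, Integrable (fun x => a x k) μ) :
    IsCompletelyMonotone fun k => ∫ x, a x k ∂μ := by
  have hdiff (i : ℕ) : ∀ b : Ω → ℕ → ℝ, (∀ k, Integrable (fun x => b x k) μ) →
      (seqDiff ^ i) (fun k => ∫ x, b x k ∂μ) = fun k => ∫ x, (seqDiff ^ i) (b x) k ∂μ := by
    induction i with
    | zero => exact fun b _ => rfl
    | succ i ih =>
      intro b hb
      simp only [pow_succ, Module.End.mul_apply]
      rw [← ih (fun x => seqDiff (b x)) fun k => (hb k).sub (hb (k + 1))]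
      congr 1 with k
      exact (integral_sub (hb k) (hb (k + 1))).symm
  intro i k
  rw [hdiff i a hint]
  exact integral_nonneg_of_ae (ha.mono fun x hx => hx i k)

end IsCompletelyMonotone

lemma isCompletelyMonotone_geometric {y : ℝ} (hy0 : 0 ≤ y) (hy1 : y ≤ 1) :
    IsCompletelyMonotone fun k => y ^ k := fun i k => by
  have hiter : (seqDiff ^ i) (fun k => y ^ k) = fun k => (1 - y) ^ i * y ^ k := by
    induction i with
    | zero => simp
    | succ i ih =>
      rw [pow_succ', Module.End.mul_apply, ih]
      ext k
      rw [seqDiff_apply]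
      ring
  have : 0 ≤ 1 - y := sub_nonneg.2 hy1
  rw [hiter]
  positivity

lemma isCompletelyMonotone_add_rpow_neg {q s : ℝ} (hq : 0 < q) (hs : 0 < s) :
    IsCompletelyMonotone fun k => ((k : ℝ) + s) ^ (-q) := by
  have hlaplace : IsCompletelyMonotone fun k : ℕ =>
      ∫ t in Set.Ioi (0 : ℝ), t ^ (q - 1) * exp (-((k + s) * t)) := by
    refine .integral ?_ fun k => ?_
    · filter_upwards [ae_restrict_mem measurableSet_Ioi] with t ht
      have ht : 0 < t := ht
      have hgeom := (isCompletelyMonotone_geometric (exp_pos (-t)).le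
        (by rw [exp_le_one_iff]; linarith)).smul (c := t ^ (q - 1) * exp (-(s * t))) (by positivity)
      convert hgeom using 2 with k
      rw [Pi.smul_apply, smul_eq_mul, ← exp_nat_mul, mul_assoc, ← exp_add]
      ring_nf
    · have hint := integrableOn_rpow_mul_exp_neg_mul_rpow (p := 1) (s := q - 1) (b := (k : ℝ) + s)
        (by linarith) one_pos (by positivity)
      simp only [rpow_one, neg_mul] at hint
      exact hint
  have := Gamma_pos_of_pos hq
  convert hlaplace.smul (c := (Gamma q)⁻¹) (by positivity) using 2 with k
  have hks : 0 < (k : ℝ) + s := by positivity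
  rw [Pi.smul_apply, smul_eq_mul, integral_rpow_mul_exp_neg_mul_Ioi hq hks, one_div,
    inv_rpow hks.le, rpow_neg hks.le]
  field_simp

lemma exponentGap_one_eq_integral (α r : ℝ) {x : ℝ} (hx : 0 < x) :
    exponentGap α r x 1 = ∫ t in (0 : ℝ)..1, α * r * (x + t) ^ (r - 1) := by
  have hderiv (t : ℝ) (ht : t ∈ Set.uIcc 0 1) :
      HasDerivAt (fun t => α * (x + t) ^ r) (α * r * (x + t) ^ (r - 1)) t := by
    rw [Set.uIcc_of_le zero_le_one] at ht
    have hpos : x + t ≠ 0 := by linarith [ht.1]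
    have h := (((hasDerivAt_id' t).const_add x).rpow_const (p := r) (.inl hpos)).const_mul α
    rwa [one_mul, ← mul_assoc] at h
  rw [intervalIntegral.integral_eq_sub_of_hasDerivAt hderiv, exponentGap, add_zero, mul_sub]
  refine ContinuousOn.intervalIntegrable (continuousOn_const.mul
    (ContinuousOn.rpow_const (by fun_prop) fun t ht => .inl ?_))
  rw [Set.uIcc_of_le zero_le_one] at ht
  linarith [ht.1]

section ExponentGap

variable {α r n : ℝ}

lemma isCompletelyMonotone_exponentGap_one (hα : 0 ≤ α) (hr0 : 0 < r) (hr1 : r < 1) (hn : 0 < n) :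
    IsCompletelyMonotone fun k => exponentGap α r (n + k) 1 := by
  have hint (k : ℕ) : exponentGap α r (n + k) 1 =
      ∫ t in Set.Ioc (0 : ℝ) 1, α * r * (k + (n + t)) ^ (-(1 - r)) := by
    rw [exponentGap_one_eq_integral α r (by positivity),
      intervalIntegral.integral_of_le zero_le_one]
    ring_nf
  simp_rw [hint]
  refine .integral ?_ fun k => ?_
  · filter_upwards [ae_restrict_mem measurableSet_Ioc] with t ht
    exact (isCompletelyMonotone_add_rpow_neg (by linarith) (by linarith [ht.1])).smul
      (mul_nonneg hα hr0.le)
  · refine (ContinuousOn.integrableOn_Icc ?_).mono_set Set.Ioc_subset_Icc_self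
    refine continuousOn_const.mul (ContinuousOn.rpow_const (by fun_prop) fun t ht => .inl ?_)
    have := ht.1
    positivity

lemma tendsto_exponentGap_add_nat_sub (hα : 0 ≤ α) (hr0 : 0 ≤ r) (hr1 : r < 1) (hn : 0 < n)
    (k : ℕ) : Tendsto (fun N : ℕ => exponentGap α r (n + N) k) atTop (nhds 0) := by
  have hbase : Tendsto (fun N : ℕ => n + N) atTop atTop :=
    tendsto_atTop_add_const_left _ _ tendsto_natCast_atTop_atTop
  have hrate : Tendsto (fun N : ℕ => decayRate α r (n + N) * k) atTop (nhds 0) := by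
    have h := (((tendsto_rpow_neg_atTop (sub_pos.2 hr1)).comp hbase).const_mul (α * r)).mul_const
      (k : ℝ)
    simpa only [decayRate, Function.comp_def, neg_sub, mul_zero, zero_mul] using h
  refine squeeze_zero (fun N => mul_nonneg hα (sub_nonneg.2 ?_)) (fun N => ?_) hrate
  · exact rpow_le_rpow (by positivity) (by simp) hr0
  · exact exponentGap_le hα hr0 hr1.le (by positivity) k.cast_nonneg

-- With `d m` the increments of the exponent `c`, `exp (-c k)` is the limit of the completely
-- monotone sequences `exp (-c N) * exp (∑ m < N, d (k + m)) = exp (c (k + N) - c N - c k)`.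
theorem isCompletelyMonotone_exp_neg_exponentGap (hα : 0 ≤ α) (hr0 : 0 < r) (hr1 : r ≤ 1)
    (hn : 0 < n) : IsCompletelyMonotone fun k => exp (-exponentGap α r n k) := by
  rcases hr1.eq_or_lt with rfl | hr1
  · convert isCompletelyMonotone_geometric (exp_pos (-α)).le (exp_le_one_iff.2 (by linarith))
      using 2 with k
    rw [exponentGap, rpow_one, rpow_one, add_sub_cancel_left, ← exp_nat_mul]
    ring_nf
  have hsum (k N : ℕ) : -exponentGap α r n N +
      ∑ m ∈ Finset.range N, exponentGap α r (n + (k + m : ℕ)) 1 =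
        exponentGap α r (n + N) k - exponentGap α r n k := by
    have htelescope := Finset.sum_range_sub (fun m : ℕ => α * (n + (k + m : ℕ)) ^ r) N
    have hterm (m : ℕ) : exponentGap α r (n + (k + m : ℕ)) 1 =
        α * (n + (k + (m + 1) : ℕ)) ^ r - α * (n + (k + m : ℕ)) ^ r := by
      rw [exponentGap]; push_cast; ring_nf
    simp_rw [hterm, htelescope, exponentGap]
    push_cast
    ring_nf
  refine .of_tendsto (l := atTop) (a := fun N : ℕ => exp (-exponentGap α r n N) • fun k =>
    exp ((∑ m ∈ Finset.range N, fun k : ℕ => exponentGap α r (n + (k + m : ℕ)) 1) k))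
    (fun N => (IsCompletelyMonotone.exp (.sum fun m _ =>
      (isCompletelyMonotone_exponentGap_one hα hr0 hr1 hn).comp_add_right m)).smul
        (exp_pos _).le) (tendsto_pi_nhds.2 fun k => ?_)
  simp only [Pi.smul_apply, smul_eq_mul, Finset.sum_apply, ← exp_add, hsum]
  have hlim := (tendsto_exponentGap_add_nat_sub hα hr0.le hr1 hn k).sub_const (exponentGap α r n k)
  rw [zero_sub] at hlim
  exact (continuous_exp.tendsto _).comp hlim

end ExponentGap

/-! ### The Euler transform and the zeros of the kernel -/

/-- The operator `a ↦ (2 * a (k + 1) - a k)_k`, whose iterates at `0` are the coefficients of the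
Euler transform of `a`. -/
def eulerStep : Module.End ℝ (ℕ → ℝ) := seqShift - seqDiff

/-- The re-expansion of `∑ a k * z ^ k` in powers of `z / (2 - z)`. -/
noncomputable def eulerTransform (a : ℕ → ℝ) (z : ℂ) : ℂ :=
  2 / (2 - z) * ∑' m, ((eulerStep ^ m) a 0 : ℂ) * (z / (2 - z)) ^ m

lemma eulerStep_apply (a : ℕ → ℝ) (k : ℕ) : eulerStep a k = 2 * a (k + 1) - a k := by
  rw [eulerStep, LinearMap.sub_apply, Pi.sub_apply, seqShift_apply, seqDiff_apply]
  ring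

lemma IsCompletelyMonotone.abs_eulerStep_pow_le {a : ℕ → ℝ} (ha : IsCompletelyMonotone a)
    (m k : ℕ) : |(eulerStep ^ m) a k| ≤ a k := by
  induction m generalizing a with
  | zero => exact (abs_of_nonneg (ha.nonneg k)).le
  | succ m ih =>
    rw [pow_succ, Module.End.mul_apply, eulerStep, LinearMap.sub_apply, map_sub, ← eulerStep]
    calc |(eulerStep ^ m) (seqShift a) k - (eulerStep ^ m) (seqDiff a) k|
        ≤ seqShift a k + seqDiff a k := (abs_sub _ _).trans (add_le_add (ih ha.shift) (ih ha.diff))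
      _ = a k := by rw [seqShift_apply, seqDiff_apply, add_sub_cancel]

section PowerSeries

variable {a : ℕ → ℝ} {z : ℂ}

lemma norm_ofReal_mul_pow_le (hz : ‖z‖ ≤ 1) (c : ℝ) (k : ℕ) : ‖(c : ℂ) * z ^ k‖ ≤ |c| := by
  rw [norm_mul, norm_pow, Complex.norm_real, norm_eq_abs]
  exact mul_le_of_le_one_right (abs_nonneg c) (pow_le_one₀ (norm_nonneg z) hz)

lemma summable_ofReal_mul_pow (ha : Summable fun k => |a k|) (hz : ‖z‖ ≤ 1) :
    Summable fun k => (a k : ℂ) * z ^ k :=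
  .of_norm_bounded ha fun k => norm_ofReal_mul_pow_le hz (a k) k

lemma norm_lt_norm_two_sub (hz : ‖z‖ ≤ 1) (hz1 : z ≠ 1) : ‖z‖ < ‖2 - z‖ := by
  have hre : z.re < 1 := by
    refine (z.re_le_norm.trans hz).lt_of_ne fun h => hz1 ?_
    have hsq := Complex.sq_norm_sub_sq_re z
    have him : z.im ^ 2 ≤ 0 := by nlinarith [norm_nonneg z]
    exact Complex.ext h (by simpa using le_antisymm him (sq_nonneg _))
  refine lt_of_pow_lt_pow_left₀ 2 (norm_nonneg _) ?_
  simp only [← Complex.normSq_eq_norm_sq, Complex.normSq_apply, Complex.sub_re, Complex.sub_im,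
    Complex.re_ofNat, Complex.im_ofNat]
  nlinarith

lemma two_sub_ne_zero (hz : ‖z‖ ≤ 1) (hz1 : z ≠ 1) : 2 - z ≠ 0 :=
  norm_pos_iff.1 ((norm_nonneg z).trans_lt (norm_lt_norm_two_sub hz hz1))

lemma norm_div_two_sub_lt_one (hz : ‖z‖ ≤ 1) (hz1 : z ≠ 1) : ‖z / (2 - z)‖ < 1 := by
  rw [norm_div, div_lt_one (norm_pos_iff.2 (two_sub_ne_zero hz hz1))]
  exact norm_lt_norm_two_sub hz hz1

lemma tsum_mul_pow_eq_eulerStep (ha : Summable fun k => |a k|) (hz : ‖z‖ ≤ 1) (hz1 : z ≠ 1) :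
    ∑' k, (a k : ℂ) * z ^ k =
      2 / (2 - z) * a 0 + z / (2 - z) * ∑' k, (eulerStep a k : ℂ) * z ^ k := by
  have hne := two_sub_ne_zero hz hz1
  have hsum := summable_ofReal_mul_pow ha hz
  have hshift : Summable fun k => (a (k + 1) : ℂ) * z ^ k :=
    summable_ofReal_mul_pow ((summable_nat_add_iff 1).2 ha) hz
  have hhead : ∑' k, (a k : ℂ) * z ^ k = a 0 + z * ∑' k, (a (k + 1) : ℂ) * z ^ k := by
    rw [hsum.tsum_eq_zero_add, ← tsum_mul_left, pow_zero, mul_one]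
    simp only [pow_succ', mul_left_comm]
  have hstep : ∑' k, (eulerStep a k : ℂ) * z ^ k =
      2 * ∑' k, (a (k + 1) : ℂ) * z ^ k - ∑' k, (a k : ℂ) * z ^ k := by
    rw [← tsum_mul_left, ← (hshift.mul_left 2).tsum_sub hsum]
    refine tsum_congr fun k => ?_
    rw [eulerStep_apply]
    push_cast
    ring
  rw [hstep]
  field_simp
  linear_combination 2 * hhead

lemma tsum_mul_pow_eq_sum_eulerStep_pow (ha : ∀ m, Summable fun k => |(eulerStep ^ m) a k|)
    (hz : ‖z‖ ≤ 1) (hz1 : z ≠ 1) (M : ℕ) :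
    ∑' k, (a k : ℂ) * z ^ k =
      2 / (2 - z) * ∑ m ∈ Finset.range M, ((eulerStep ^ m) a 0 : ℂ) * (z / (2 - z)) ^ m +
        (z / (2 - z)) ^ M * ∑' k, ((eulerStep ^ M) a k : ℂ) * z ^ k := by
  induction M with
  | zero => simp
  | succ M ih =>
    rw [ih, tsum_mul_pow_eq_eulerStep (ha M) hz hz1, Finset.sum_range_succ, pow_succ' eulerStep,
      Module.End.mul_apply]
    ring

lemma IsCompletelyMonotone.summable_eulerStep_pow (ha : IsCompletelyMonotone a) {v : ℂ}
    (hv : ‖v‖ < 1) : Summable fun m => ((eulerStep ^ m) a 0 : ℂ) * v ^ m := by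
  refine .of_norm_bounded ((summable_geometric_of_lt_one (norm_nonneg v) hv).mul_left (a 0))
    fun m => ?_
  rw [norm_mul, norm_pow, Complex.norm_real]
  exact mul_le_mul_of_nonneg_right (ha.abs_eulerStep_pow_le m 0) (by positivity)

lemma IsCompletelyMonotone.tsum_mul_pow_eq_eulerTransform (ha : IsCompletelyMonotone a)
    (hsum : Summable a) (hz : ‖z‖ ≤ 1) (hz1 : z ≠ 1) :
    ∑' k, (a k : ℂ) * z ^ k = eulerTransform a z := by
  have hv := norm_div_two_sub_lt_one hz hz1
  have habs (m : ℕ) : Summable fun k => |(eulerStep ^ m) a k| :=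
    .of_nonneg_of_le (fun k => abs_nonneg _) (ha.abs_eulerStep_pow_le m) hsum
  have hrem : Tendsto (fun M => (z / (2 - z)) ^ M * ∑' k, ((eulerStep ^ M) a k : ℂ) * z ^ k)
      atTop (nhds 0) := by
    have hgeom := (tendsto_pow_atTop_nhds_zero_of_lt_one (norm_nonneg _) hv).mul_const (∑' k, a k)
    rw [zero_mul] at hgeom
    refine squeeze_zero_norm (fun M => ?_) hgeom
    rw [norm_mul, norm_pow]
    refine mul_le_mul_of_nonneg_left ?_ (by positivity)
    exact tsum_of_norm_bounded hsum.hasSum fun k =>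
      (norm_ofReal_mul_pow_le hz _ k).trans (ha.abs_eulerStep_pow_le M k)
  have hlim := ((ha.summable_eulerStep_pow hv).hasSum.tendsto_sum_nat.const_mul (2 / (2 - z))).add
    hrem
  rw [add_zero] at hlim
  refine tendsto_nhds_unique (tendsto_const_nhds.congr fun M => ?_) hlim
  exact tsum_mul_pow_eq_sum_eulerStep_pow habs hz hz1 M

lemma analyticAt_tsum_mul_pow {c : ℕ → ℂ} {C : ℝ} (hc : ∀ m, ‖c m‖ ≤ C) {v : ℂ} (hv : ‖v‖ < 1) :
    AnalyticAt ℂ (fun w => ∑' m, c m * w ^ m) v := by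
  obtain ⟨ρ, hvρ, hρ1⟩ := exists_between hv
  have hρ0 : 0 ≤ ρ := (norm_nonneg v).trans hvρ.le
  have hC : 0 ≤ C := (norm_nonneg _).trans (hc 0)
  have hdiff : DifferentiableOn ℂ (fun w => ∑' m, c m * w ^ m) (Metric.ball 0 ρ) := by
    refine Complex.differentiableOn_tsum_of_summable_norm
      ((summable_geometric_of_lt_one hρ0 hρ1).mul_left C) (fun m => by fun_prop)
      Metric.isOpen_ball fun m w hw => ?_
    rw [mem_ball_zero_iff] at hw
    rw [norm_mul, norm_pow]
    gcongr
    exact hc m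
  exact hdiff.analyticAt (Metric.isOpen_ball.mem_nhds (mem_ball_zero_iff.2 hvρ))

lemma IsCompletelyMonotone.analyticAt_eulerTransform (ha : IsCompletelyMonotone a)
    (hz : ‖z‖ ≤ 1) (hz1 : z ≠ 1) : AnalyticAt ℂ (eulerTransform a) z := by
  have hne := two_sub_ne_zero hz hz1
  have hden : AnalyticAt ℂ (fun w : ℂ => 2 - w) z := by fun_prop
  have hseries : AnalyticAt ℂ (fun v : ℂ => ∑' m, ((eulerStep ^ m) a 0 : ℂ) * v ^ m)
      (z / (2 - z)) := by
    refine analyticAt_tsum_mul_pow (C := a 0) (fun m => ?_) (norm_div_two_sub_lt_one hz hz1)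
    rw [Complex.norm_real]
    exact ha.abs_eulerStep_pow_le m 0
  exact (analyticAt_const.div hden hne).mul
    (AnalyticAt.fun_comp (f := fun w : ℂ => w / (2 - w)) hseries (analyticAt_id.div hden hne))

end PowerSeries

lemma ae_ne_zero_of_periodic_of_analyticOnNhd {K : ℝ → ℝ} {T : ℝ} (hT : 0 < T)
    (hper : Function.Periodic K T) (hcont : Continuous K) (hK : AnalyticOnNhd ℝ K (Set.Ioo 0 T))
    (hne : K ≠ 0) : ∀ᵐ x, K x ≠ 0 := by
  have hne' : ¬Set.EqOn K 0 (Set.Ioo 0 T) := fun h => hne <| funext fun x => by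
    have hcl := h.closure hcont continuous_const
    rw [closure_Ioo hT.ne] at hcl
    obtain ⟨y, hy, hxy⟩ := hper.exists_mem_Ico₀ hT x
    exact hxy.trans (hcl (Set.Ico_subset_Icc_self hy))
  have hdiscrete := (hK.eqOn_zero_or_eventually_ne_zero_of_preconnected
    isPreconnected_Ioo).resolve_left hne'
  have hperiod : ∀ᵐ x ∂volume.restrict (Set.Ioc 0 T), K x ≠ 0 := by
    rw [← Measure.restrict_congr_set Ioo_ae_eq_Ioc]
    exact ae_restrict_le_codiscreteWithin measurableSet_Ioo hdiscrete
  refine (isAddFundamentalDomain_Ioc hT 0).measure_zero_of_invariant _ (fun g => ?_) ?_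
  · ext x
    rw [Set.mem_vadd_set_iff_neg_vadd_mem]
    simp only [Set.mem_compl_iff, Set.mem_ofPred_eq, hper.map_vadd_zmultiples]
  · rw [zero_add, ← Measure.restrict_apply₀' nullMeasurableSet_Ioc]
    exact hperiod

section Kernel

variable {α r : ℝ}

lemma analyticAt_exp_ofReal_mul_I (t : ℝ) :
    AnalyticAt ℝ (fun t : ℝ => Complex.exp (t * Complex.I)) t :=
  analyticAt_cexp.restrictScalars.comp ((Complex.ofRealCLM.analyticAt t).mul analyticAt_const)

lemma analyticAt_tailSeries (hα : 0 < α) (hr0 : 0 < r) (hr1 : r ≤ 1) {n : ℕ} (hn : 0 < n) {t : ℝ}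
    (ht : Complex.exp (t * Complex.I) ≠ 1) : AnalyticAt ℝ (tailSeries α r n) t := by
  have hCM := isCompletelyMonotone_exp_neg_exponentGap hα.le hr0 hr1 (n := n) (by positivity)
  have hcircle := analyticAt_exp_ofReal_mul_I t
  have heuler := AnalyticAt.fun_comp (f := fun t : ℝ => Complex.exp (t * Complex.I))
    (hCM.analyticAt_eulerTransform (Complex.norm_exp_ofReal_mul_I t).le ht).restrictScalars hcircle
  refine heuler.congr ?_
  filter_upwards [hcircle.continuousAt.eventually_ne ht] with x hx
  exact (hCM.tsum_mul_pow_eq_eulerTransform (summable_exp_neg_exponentGap hα hr0 n)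
    (Complex.norm_exp_ofReal_mul_I x).le hx).symm

lemma analyticAt_modulatedRe {F : ℝ → ℂ} {t : ℝ} (n : ℕ) (u : ℝ) (hF : AnalyticAt ℝ F t) :
    AnalyticAt ℝ (modulatedRe n u F) t := by
  have harg : AnalyticAt ℝ (fun t : ℝ => n * t + u) t := by fun_prop
  exact (Complex.reCLM.analyticAt _).comp (((analyticAt_exp_ofReal_mul_I _).comp harg).mul hF)

lemma kernelTail_eq_modulatedRe (hα : 0 < α) (hr : 0 < r) (β : ℝ) {n : ℕ} (hn : 0 < n) (t : ℝ) :
    kernelTail α r β (n - 1) t =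
      exp (-α * (n : ℝ) ^ r) * modulatedRe n (-(β * π / 2)) (tailSeries α r n) t := by
  have hsum := (summable_ofReal_mul_exp_pow (summable_exp_neg_exponentGap hα hr n) t).mul_left
    (Complex.exp (((n * t + -(β * π / 2) : ℝ) : ℂ) * Complex.I))
  rw [modulatedRe, tailSeries, ← tsum_mul_left, Complex.re_tsum hsum, ← tsum_mul_left]
  refine tsum_congr fun k => ?_
  have hindex : ((k + (n - 1) : ℕ) : ℝ) + 1 = n + k := by
    rw [← Nat.cast_add_one, ← Nat.cast_add]
    congr 1
    omega
  have hphase : Complex.exp (((n * t + -(β * π / 2) : ℝ) : ℂ) * Complex.I) *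
      Complex.exp (t * Complex.I) ^ k =
        Complex.exp ((((n + k) * t - β * π / 2 : ℝ) : ℂ) * Complex.I) := by
    rw [← Complex.exp_nat_mul, ← Complex.exp_add]
    push_cast
    ring_nf
  rw [hindex, mul_left_comm, hphase, Complex.re_ofReal_mul, Complex.exp_ofReal_mul_I_re,
    ← mul_assoc, ← exp_add, exponentGap]
  ring_nf

lemma genPoissonKernel_eq_modulatedRe (hα : 0 < α) (hr : 0 < r) (β : ℝ) :
    genPoissonKernel α r β = fun t =>
      exp (-α * ((1 : ℕ) : ℝ) ^ r) * modulatedRe 1 (-(β * π / 2)) (tailSeries α r 1) t :=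
  funext fun t => kernelTail_eq_modulatedRe hα hr β one_pos t

lemma continuous_genPoissonKernel (hα : 0 < α) (hr : 0 < r) (β : ℝ) :
    Continuous (genPoissonKernel α r β) := by
  rw [genPoissonKernel_eq_modulatedRe hα hr]
  exact continuous_const.mul (continuous_modulatedRe _ _ (continuous_tailSeries hα hr 1))

lemma genPoissonKernel_periodic (hα : 0 < α) (hr : 0 < r) (β : ℝ) :
    Function.Periodic (genPoissonKernel α r β) (2 * π) := by
  rw [genPoissonKernel_eq_modulatedRe hα hr]
  exact fun t => congrArg _ (modulatedRe_periodic _ _ (tailSeries_periodic α r 1) t)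

lemma analyticOnNhd_genPoissonKernel (hα : 0 < α) (hr0 : 0 < r) (hr1 : r ≤ 1) (β : ℝ) :
    AnalyticOnNhd ℝ (genPoissonKernel α r β) (Set.Ioo 0 (2 * π)) := fun t ht => by
  have hne : Complex.exp (t * Complex.I) ≠ 1 := fun h => by
    have hcos : cos t = 1 := by rw [← Complex.exp_ofReal_mul_I_re, h, Complex.one_re]
    exact ht.1.ne' ((cos_eq_one_iff_of_lt_of_lt (by linarith [ht.1, pi_pos]) ht.2).1 hcos)
  rw [genPoissonKernel_eq_modulatedRe hα hr0]
  exact analyticAt_const.mul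
    (analyticAt_modulatedRe _ _ (analyticAt_tailSeries hα hr0 hr1 one_pos hne))

lemma summable_exp_neg_mul_add_one_rpow (hα : 0 < α) (hr : 0 < r) :
    Summable fun k : ℕ => exp (-α * ((k : ℝ) + 1) ^ r) := by
  simpa using (summable_nat_add_iff 1).2 (summable_exp_neg_mul_rpow hα hr)

lemma genPoissonKernel_ne_zero (hα : 0 < α) (hr : 0 < r) (β : ℝ) : genPoissonKernel α r β ≠ 0 := by
  intro h0
  set a : ℕ → ℝ := fun k => exp (-α * ((k : ℝ) + 1) ^ r)
  have hseries (x : ℝ) : genPoissonKernel α r β x = 0 / 2 +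
      ∑' k, trigTerm (fun k => a k * cos (β * π / 2)) (fun k => a k * sin (β * π / 2)) k x := by
    rw [zero_div, zero_add]
    refine tsum_congr fun k => ?_
    rw [trigTerm, cos_sub]
    ring
  have hsum (c : ℝ) : Summable fun k => |a k * c| :=
    ((summable_exp_neg_mul_add_one_rpow hα hr).mul_right c).abs
  have hcos := fourierCoefA_succ_of_eq_trigSeries (hsum _) (hsum _) hseries 0
  have hsin := fourierCoefB_succ_of_eq_trigSeries (hsum _) (hsum _) hseries 0
  simp only [h0, fourierCoefA, fourierCoefB, Pi.zero_apply, zero_mul,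
    intervalIntegral.integral_zero, mul_zero, zero_eq_mul, a, (exp_pos _).ne', false_or]
    at hcos hsin
  simpa [hcos, hsin] using sin_sq_add_cos_sq (β * π / 2)

lemma ae_genPoissonKernel_ne_zero (hα : 0 < α) (hr0 : 0 < r) (hr1 : r ≤ 1) (β : ℝ) :
    ∀ᵐ t, genPoissonKernel α r β t ≠ 0 :=
  ae_ne_zero_of_periodic_of_analyticOnNhd two_pi_pos (genPoissonKernel_periodic hα hr0 β)
    (continuous_genPoissonKernel hα hr0 β) (analyticOnNhd_genPoissonKernel hα hr0 hr1 β)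
    (genPoissonKernel_ne_zero hα hr0 β)

lemma aestronglyMeasurable_of_genPoissonKernel_mul (hα : 0 < α) (hr0 : 0 < r) (hr1 : r ≤ 1)
    {β x : ℝ} {φ : ℝ → ℝ} {s : Set ℝ}
    (h : AEStronglyMeasurable (fun t => genPoissonKernel α r β (x - t) * φ t) (volume.restrict s)) :
    AEStronglyMeasurable φ (volume.restrict s) := by
  have hcont : Continuous fun t => genPoissonKernel α r β (x - t) :=
    (continuous_genPoissonKernel hα hr0 β).comp (continuous_sub_left x)
  refine (hcont.measurable.inv.aestronglyMeasurable.mul h).congr ?_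
  have hne : ∀ᵐ t, genPoissonKernel α r β (x - t) ≠ 0 :=
    (Measure.measurePreserving_sub_left volume x).quasiMeasurePreserving.ae
      (ae_genPoissonKernel_ne_zero hα hr0 hr1 β)
  filter_upwards [ae_restrict_of_ae hne] with t ht
  exact inv_mul_cancel_left₀ ht (φ t)

end Kernel

/-! ### Duality over a period -/

/-- The odd power `sign x * |x| ^ q`, written as a difference of powers of the positive and
negative parts of `x`, which makes its continuity for `0 ≤ q` evident. -/
noncomputable def signedPow (q x : ℝ) : ℝ := max x 0 ^ q - max (-x) 0 ^ q

section SignedPow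

variable {q : ℝ}

lemma continuous_signedPow (hq : 0 ≤ q) : Continuous (signedPow q) := by
  unfold signedPow; fun_prop (disch := exact hq)

lemma abs_signedPow (hq : 0 < q) (x : ℝ) : |signedPow q x| = |x| ^ q := by
  rcases le_total 0 x with hx | hx
  · simp [signedPow, hx, zero_rpow hq.ne', abs_of_nonneg, rpow_nonneg]
  · simp [signedPow, hx, zero_rpow hq.ne', abs_of_nonpos, rpow_nonneg]

lemma mul_signedPow (hq : 0 < q) (x : ℝ) : x * signedPow q x = |x| ^ (q + 1) := by
  rcases le_total 0 x with hx | hx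
  · rw [rpow_add_one' (abs_nonneg x) (by linarith)]
    simp [signedPow, hx, zero_rpow hq.ne', abs_of_nonneg, mul_comm]
  · rw [rpow_add_one' (abs_nonneg x) (by linarith)]
    simp [signedPow, hx, zero_rpow hq.ne', abs_of_nonpos, mul_comm]

end SignedPow

lemma integral_period_eq {φ : ℝ → ℝ} (hφ : Function.Periodic φ (2 * π)) (a : ℝ) :
    ∫ t in a..(a + 2 * π), φ t = ∫ t in (-π)..π, φ t := by
  rw [hφ.intervalIntegral_add_eq a (-π), show -π + 2 * π = π by ring]

lemma integral_comp_add_of_periodic {φ : ℝ → ℝ} (hφ : Function.Periodic φ (2 * π)) (h : ℝ) :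
    ∫ t in (-π)..π, φ (t + h) = ∫ t in (-π)..π, φ t := by
  rw [intervalIntegral.integral_comp_add_right, show π + h = (-π + h) + 2 * π by ring,
    integral_period_eq hφ]

lemma eLpNorm_restrict_period_eq {φ : ℝ → ℝ} (hφ : Function.Periodic φ (2 * π)) {p : ℝ}
    (hp : 0 < p) (a : ℝ) :
    eLpNorm φ (ENNReal.ofReal p) (volume.restrict (Set.Ioc a (a + 2 * π))) =
      eLpNorm φ (ENNReal.ofReal p) (volume.restrict (Set.Ioc (-π) π)) := by
  have hper : Function.Periodic (fun x => ‖φ x‖ₑ ^ (ENNReal.ofReal p).toReal) (2 * π) :=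
    fun x => by simp only [hφ x]
  have hlintegral := (isAddFundamentalDomain_Ioc two_pi_pos a).setLIntegral_eq
    (isAddFundamentalDomain_Ioc two_pi_pos (-π)) (μ := volume)
    (fun x => ‖φ x‖ₑ ^ (ENNReal.ofReal p).toReal) hper.map_vadd_zmultiples
  rw [show -π + 2 * π = π by ring] at hlintegral
  simp only [eLpNorm_eq_lintegral_rpow_enorm_toReal (ENNReal.ofReal_pos.2 hp).ne'
    ENNReal.ofReal_ne_top, hlintegral]

section Duality

variable {p s : ℝ}

lemma periodNorm_le_one_iff (hp : 0 < p) {φ : ℝ → ℝ}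
    (hφ : MemLp φ (ENNReal.ofReal p) (volume.restrict (Set.Ioc (-π) π))) :
    periodNorm p φ ≤ 1 ↔
      eLpNorm φ (ENNReal.ofReal p) (volume.restrict (Set.Ioc (-π) π)) ≤ 1 := by
  rw [periodNorm_eq_lpNorm hp hφ.aestronglyMeasurable, ← toReal_eLpNorm hφ.aestronglyMeasurable,
    ← ENNReal.toReal_one, ENNReal.toReal_le_toReal hφ.eLpNorm_ne_top ENNReal.one_ne_top]

lemma abs_integral_mul_le_periodNorm (hps : p.HolderConjugate s) {G φ : ℝ → ℝ}
    (hG : Continuous G) (hφ : MemLp φ (ENNReal.ofReal p) (volume.restrict (Set.Ioc (-π) π))) :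
    |∫ t in (-π)..π, G t * φ t| ≤ periodNorm s G * periodNorm p φ := by
  have hholder := integral_mul_norm_le_Lp_mul_Lq hps.symm
    (memLp_restrict_Ioc_of_continuous hG (ENNReal.ofReal s) (-π) π) hφ
  simp only [← intervalIntegral.integral_of_le neg_pi_le_pi] at hholder
  refine (intervalIntegral.abs_integral_le_integral_abs neg_pi_le_pi).trans ?_
  simpa only [abs_mul, ← norm_eq_abs, periodNorm] using hholder

lemma exists_periodNorm_le_one_integral_mul_eq (hps : p.HolderConjugate s) {H : ℝ → ℝ}
    (hH : Continuous H) (hper : Function.Periodic H (2 * π)) :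
    ∃ ψ : ℝ → ℝ, Continuous ψ ∧ Function.Periodic ψ (2 * π) ∧ periodNorm p ψ ≤ 1 ∧
      ∫ t in (-π)..π, H t * ψ t = periodNorm s H := by
  have hs := hps.symm.lt
  have hs1 : 0 < s - 1 := sub_pos.2 hs
  have hpow : (s - 1) * p = s := hps.symm.sub_one_mul_conj
  set N := periodNorm s H
  have hN0 : 0 ≤ N := periodNorm_nonneg s H
  have hNs : N ^ s = ∫ t in (-π)..π, ‖H t‖ ^ s := periodNorm_rpow hps.symm.ne_zero H
  refine ⟨fun t => (N ^ (s - 1))⁻¹ * signedPow (s - 1) (H t),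
    continuous_const.mul ((continuous_signedPow hs1.le).comp hH), fun t => by simp only [hper t],
    ?_, ?_⟩
  · have hψ : ∀ t, ‖(N ^ (s - 1))⁻¹ * signedPow (s - 1) (H t)‖ ^ p = (N ^ s)⁻¹ * ‖H t‖ ^ s :=
      fun t => by
        rw [norm_mul, norm_eq_abs (signedPow _ _), abs_signedPow hs1, norm_of_nonneg
          (by positivity), mul_rpow (by positivity) (by positivity), inv_rpow (by positivity),
          ← rpow_mul hN0, ← rpow_mul (abs_nonneg _), hpow, norm_eq_abs]
    rw [periodNorm]
    simp_rw [hψ]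
    rw [intervalIntegral.integral_const_mul, ← hNs]
    exact rpow_le_one (by positivity) inv_mul_le_one (by have := hps.pos; positivity)
  · have hHψ : ∀ t, H t * ((N ^ (s - 1))⁻¹ * signedPow (s - 1) (H t)) =
        (N ^ (s - 1))⁻¹ * ‖H t‖ ^ s := fun t => by
      rw [mul_left_comm, mul_signedPow hs1, sub_add_cancel, norm_eq_abs]
    simp_rw [hHψ]
    rw [intervalIntegral.integral_const_mul, ← hNs]
    rcases hN0.eq_or_lt with hzero | hpos
    · rw [← hzero, zero_rpow (by linarith : s ≠ 0), mul_zero]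
    · rw [← rpow_neg hN0, ← rpow_add hpos, neg_sub, sub_add_cancel, rpow_one]

lemma periodNorm_half_sub_translate_le (hp : 1 ≤ p) {ψ : ℝ → ℝ} (hψ : Continuous ψ)
    (hper : Function.Periodic ψ (2 * π)) (h : ℝ) :
    periodNorm p (fun t => 1 / 2 * (ψ t - ψ (t + h))) ≤ periodNorm p ψ := by
  have htriangle := periodNorm_add_le (F := ψ) (G := fun t => -ψ (t + h)) hp hψ (by fun_prop)
  have hneg : periodNorm p (fun t => -ψ (t + h)) = periodNorm p ψ := by
    rw [← periodNorm_comp_add_right hper h]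
    exact periodNorm_congr fun t => norm_neg _
  simp only [← sub_eq_add_neg] at htriangle
  calc periodNorm p (fun t => 1 / 2 * (ψ t - ψ (t + h)))
      = periodNorm p (fun t => 1 / 2 * ‖ψ t - ψ (t + h)‖) :=
        periodNorm_congr fun t => by rw [norm_mul, norm_mul, norm_norm]
    _ = 1 / 2 * periodNorm p (fun t => ψ t - ψ (t + h)) :=
        periodNorm_const_mul_norm (by linarith) (by norm_num) _
    _ ≤ periodNorm p ψ := by linarith

-- Antisymmetrizing the dual function of `G - G(· - h)` under translation by `h` makes it mean zero.
lemma exists_meanZero_integral_mul_eq (hps : p.HolderConjugate s) {G : ℝ → ℝ}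
    (hG : Continuous G) (hper : Function.Periodic G (2 * π)) (h : ℝ) :
    ∃ φ : ℝ → ℝ, Continuous φ ∧ Function.Periodic φ (2 * π) ∧ periodNorm p φ ≤ 1 ∧
      ∫ t in (-π)..π, φ t = 0 ∧
      ∫ t in (-π)..π, G t * φ t = periodNorm s (fun t => 1 / 2 * (G t - G (t - h))) := by
  have hGh : Function.Periodic (fun t => G (t - h)) (2 * π) := hper.sub_const h
  obtain ⟨ψ, hψ, hψper, hψnorm, hψint⟩ := exists_periodNorm_le_one_integral_mul_eq hps
    (H := fun t => 1 / 2 * (G t - G (t - h))) (by fun_prop)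
    (fun t => by simp only [hper t, hGh t])
  have hψh : Function.Periodic (fun t => ψ (t + h)) (2 * π) := hψper.add_const h
  have hint : ∀ {f : ℝ → ℝ}, Continuous f → IntervalIntegrable f volume (-π) π :=
    fun hf => hf.intervalIntegrable _ _
  refine ⟨fun t => 1 / 2 * (ψ t - ψ (t + h)), by fun_prop,
    fun t => by simp only [hψper t, hψh t],
    (periodNorm_half_sub_translate_le hps.lt.le hψ hψper h).trans hψnorm, ?_, ?_⟩
  · rw [intervalIntegral.integral_const_mul, intervalIntegral.integral_sub (hint hψ)
      (hint (by fun_prop)), integral_comp_add_of_periodic hψper, sub_self, mul_zero]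
  · have hshift : ∫ t in (-π)..π, G t * ψ (t + h) = ∫ t in (-π)..π, G (t - h) * ψ t := by
      have htranslate := integral_comp_add_of_periodic (hGh.mul hψper) h
      simpa only [Pi.mul_apply, add_sub_cancel_right] using htranslate
    have hleft : ∀ t, G t * (1 / 2 * (ψ t - ψ (t + h))) =
        1 / 2 * (G t * ψ t - G t * ψ (t + h)) := fun t => by ring
    have hright : ∀ t, 1 / 2 * (G t - G (t - h)) * ψ t =
        1 / 2 * (G t * ψ t - G (t - h) * ψ t) := fun t => by ring
    simp_rw [hright] at hψint
    simp_rw [← hψint, hleft, intervalIntegral.integral_const_mul]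
    rw [intervalIntegral.integral_sub (hint (by fun_prop)) (hint (by fun_prop)),
      intervalIntegral.integral_sub (hint (by fun_prop)) (hint (by fun_prop)), hshift]

end Duality

section HalfPeriodShift

variable {n : ℕ}

lemma modulatedRe_add_pi_div (hn : n ≠ 0) (u : ℝ) (F : ℝ → ℂ) (t : ℝ) :
    modulatedRe n u F (t + π / n) = -modulatedRe n u (fun x => F (x + π / n)) t := by
  have hphase : u + (n * (t + π / n) + (F (t + π / n)).arg) =
      u + (n * t + (F (t + π / n)).arg) + π := by
    field_simp; ring
  rw [modulatedRe_eq_norm_mul_cos, modulatedRe_eq_norm_mul_cos, hphase, cos_add_pi, mul_neg]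

-- The carrier changes sign after half of its period.
lemma periodNorm_modulatedRe_sub_le_half_diff {s : ℝ} (hs : 1 ≤ s) {F : ℝ → ℂ}
    (hF : Continuous F) (hn : n ≠ 0) (u : ℝ) :
    periodNorm s (modulatedRe n u F) - periodNorm s (fun t => F (t + π / n) - F t) ≤
      periodNorm s (fun t => 1 / 2 * (modulatedRe n u F t - modulatedRe n u F (t + π / n))) := by
  set R := modulatedRe n u F with hR
  have hRcont : Continuous R := continuous_modulatedRe n u hF
  have hdiff : ∀ t, R t - 1 / 2 * (R t - R (t + π / n)) =
      -(1 / 2 * modulatedRe n u (fun x => F (x + π / n) - F x) t) := fun t => by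
    rw [← modulatedRe_sub n u (fun x => F (x + π / n)) F, hR, modulatedRe_add_pi_div hn]
    ring
  have htriangle := (abs_le.1 (abs_periodNorm_sub_le hs hRcont
    (G := fun t => 1 / 2 * (R t - R (t + π / n))) (by fun_prop))).2
  have hbound : periodNorm s (fun t => R t - 1 / 2 * (R t - R (t + π / n))) ≤
      periodNorm s (fun t => F (t + π / n) - F t) :=
    periodNorm_mono (by linarith) (by fun_prop) (by fun_prop) fun t _ => by
      rw [hdiff, norm_neg, norm_mul, norm_of_nonneg (by norm_num : (0 : ℝ) ≤ 1 / 2)]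
      have hmod := norm_modulatedRe_le n u (fun x => F (x + π / n) - F x) t
      linarith [norm_nonneg (modulatedRe n u (fun x => F (x + π / n) - F x) t)]
  linarith

end HalfPeriodShift

/-! ### The deviation on the class as a norm of the kernel -/

section Deviation

variable {α r β p s : ℝ} {n : ℕ}

lemma EnC_le_of_forall {P : ℝ≥0∞} {U : ℝ} (hU : 0 ≤ U)
    (h : ∀ f ∈ poissonClass α r β P, ∀ x, |f x - fourierSum (n - 1) f x| ≤ U) :
    EnC α r β P n ≤ U :=
  Real.iSup_le (fun f => Real.iSup_le (fun hf => Real.iSup_le (h f hf) hU) hU) hU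

lemma le_EnC_of_forall_le {P : ℝ≥0∞} {U : ℝ} (hU : 0 ≤ U)
    (h : ∀ f ∈ poissonClass α r β P, ∀ x, |f x - fourierSum (n - 1) f x| ≤ U)
    {f : ℝ → ℝ} (hf : f ∈ poissonClass α r β P) (x : ℝ) :
    |f x - fourierSum (n - 1) f x| ≤ EnC α r β P n := by
  have hbdd : BddAbove (Set.range fun f => ⨆ (_ : f ∈ poissonClass α r β P), ⨆ x : ℝ,
      |f x - fourierSum (n - 1) f x|) :=
    ⟨U, Set.forall_mem_range.2 fun f => Real.iSup_le (fun hf => Real.iSup_le (h f hf) hU) hU⟩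
  refine le_trans ?_ (le_ciSup hbdd f)
  rw [ciSup_pos hf]
  exact le_ciSup (f := fun x => |f x - fourierSum (n - 1) f x|)
    ⟨U, Set.forall_mem_range.2 (h f hf)⟩ x

lemma sub_fourierSum_eq_integral_modulatedRe (hα : 0 < α) (hr : 0 < r) (hn : 0 < n)
    {φ f : ℝ → ℝ} (hφ : IntervalIntegrable φ volume (-π) π) {A : ℝ}
    (hf : ∀ x, f x = A / 2 + 1 / π * ∫ t in (-π)..π, genPoissonKernel α r β (x - t) * φ t)
    (x : ℝ) :
    f x - fourierSum (n - 1) f x = 1 / π * (exp (-α * (n : ℝ) ^ r) *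
      ∫ t in (-π)..π, modulatedRe n (-(β * π / 2)) (tailSeries α r n) (x - t) * φ t) := by
  rw [sub_fourierSum_eq_integral_kernelTail (summable_exp_neg_mul_add_one_rpow hα hr) hφ hf]
  simp_rw [kernelTail_eq_modulatedRe hα hr β hn, mul_assoc]
  rw [intervalIntegral.integral_const_mul]

lemma periodNorm_comp_const_sub {F : ℝ → ℝ} (hF : Function.Periodic F (2 * π)) (x : ℝ) :
    periodNorm s (fun t => F (x - t)) = periodNorm s F := by
  rw [← periodNorm_comp_add_right hF x, ← periodNorm_comp_neg fun t => F (t + x)]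
  simp only [neg_add_eq_sub]

lemma continuous_modulatedRe_tailSeries (hα : 0 < α) (hr : 0 < r) (n : ℕ) (u : ℝ) :
    Continuous (modulatedRe n u (tailSeries α r n)) :=
  continuous_modulatedRe n u (continuous_tailSeries hα hr n)

lemma modulatedRe_tailSeries_periodic (α r : ℝ) (n : ℕ) (u : ℝ) :
    Function.Periodic (modulatedRe n u (tailSeries α r n)) (2 * π) :=
  modulatedRe_periodic n u (tailSeries_periodic α r n)

/-- The sharp constant for Fourier approximation on the class without the mean-zero condition
on `φ`, by `L^p`-`L^s` duality. -/
noncomputable def dualDeviation (α r β s : ℝ) (n : ℕ) : ℝ :=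
  1 / π * (exp (-α * (n : ℝ) ^ r) *
    periodNorm s (modulatedRe n (-(β * π / 2)) (tailSeries α r n)))

lemma dualDeviation_nonneg (α r β s : ℝ) (n : ℕ) : 0 ≤ dualDeviation α r β s n := by
  have := periodNorm_nonneg s (modulatedRe n (-(β * π / 2)) (tailSeries α r n))
  unfold dualDeviation; positivity

-- If `φ` is not a.e. measurable, neither is its product with the kernel, whose zeros are null;
-- the integral defining `f` is then the junk value `0`, so `f` is constant.
lemma abs_sub_fourierSum_le_dualDeviation (hα : 0 < α) (hr0 : 0 < r) (hr1 : r ≤ 1)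
    (hps : p.HolderConjugate s) (hn : 0 < n) {f : ℝ → ℝ}
    (hf : f ∈ poissonClass α r β (ENNReal.ofReal p)) (x : ℝ) :
    |f x - fourierSum (n - 1) f x| ≤ dualDeviation α r β s n := by
  obtain ⟨-, A, φ, hφper, hφnorm, -, hf⟩ := hf
  by_cases hφ : AEStronglyMeasurable φ (volume.restrict (Set.Ioc (-π) π))
  · have heq := eLpNorm_restrict_period_eq hφper hps.pos 0
    rw [zero_add] at heq
    rw [heq] at hφnorm
    have hLp : MemLp φ (ENNReal.ofReal p) (volume.restrict (Set.Ioc (-π) π)) :=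
      ⟨hφ, hφnorm.trans_lt ENNReal.one_lt_top⟩
    have hint : IntervalIntegrable φ volume (-π) π := by
      rw [intervalIntegrable_iff_integrableOn_Ioc_of_le neg_pi_le_pi]
      exact hLp.integrable (by simpa using hps.lt.le)
    rw [sub_fourierSum_eq_integral_modulatedRe hα hr0 hn hint hf, abs_mul, abs_mul, abs_exp,
      abs_of_pos (one_div_pos.2 pi_pos), dualDeviation,
      ← periodNorm_comp_const_sub (modulatedRe_tailSeries_periodic α r n _) x]
    gcongr
    refine (abs_integral_mul_le_periodNorm hps
      ((continuous_modulatedRe_tailSeries hα hr0 n _).comp (by fun_prop)) hLp).trans ?_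
    exact mul_le_of_le_one_right (periodNorm_nonneg _ _)
      ((periodNorm_le_one_iff hps.pos hLp).2 hφnorm)
  · have hzero : ∀ x, ∫ t in (-π)..π, genPoissonKernel α r β (x - t) * φ t = 0 := fun x => by
      rw [intervalIntegral.integral_of_le neg_pi_le_pi]
      exact integral_non_aestronglyMeasurable fun h =>
        hφ (aestronglyMeasurable_of_genPoissonKernel_mul hα hr0 hr1 h)
    rw [sub_fourierSum_eq_integral_modulatedRe (β := β) (φ := fun _ => 0) (A := A) hα hr0 hn
      (by simp) (fun x => by rw [hf, hzero]; simp)]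
    simpa using dualDeviation_nonneg α r β s n

lemma mem_poissonClass_of_continuous (hp : 0 < p) {φ : ℝ → ℝ} (hφ : Continuous φ)
    (hper : Function.Periodic φ (2 * π)) (hnorm : periodNorm p φ ≤ 1)
    (hmean : ∫ t in (-π)..π, φ t = 0) (hα : 0 < α) (hr : 0 < r) :
    (fun x => 0 / 2 + 1 / π * ∫ t in (-π)..π, genPoissonKernel α r β (x - t) * φ t) ∈
      poissonClass α r β (ENNReal.ofReal p) := by
  refine ⟨fun x => ?_, 0, φ, hper, ?_, ?_, fun x => rfl⟩
  · simp only [add_sub_right_comm x (2 * π), genPoissonKernel_periodic hα hr β _]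
  · have heq := eLpNorm_restrict_period_eq hper hp 0
    rw [zero_add] at heq
    rw [heq, ← periodNorm_le_one_iff hp (memLp_restrict_Ioc_of_continuous hφ _ _ _)]
    exact hnorm
  · simpa only [zero_add, hmean] using integral_period_eq hper 0

theorem EnC_le_dualDeviation (hα : 0 < α) (hr0 : 0 < r) (hr1 : r ≤ 1)
    (hps : p.HolderConjugate s) (hn : 0 < n) :
    EnC α r β (ENNReal.ofReal p) n ≤ dualDeviation α r β s n :=
  EnC_le_of_forall (dualDeviation_nonneg α r β s n) fun _ hf x =>
    abs_sub_fourierSum_le_dualDeviation hα hr0 hr1 hps hn hf x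

theorem dualDeviation_sub_le_EnC (hα : 0 < α) (hr0 : 0 < r) (hr1 : r ≤ 1)
    (hps : p.HolderConjugate s) (hn : 0 < n) :
    dualDeviation α r β s n - 1 / π * (exp (-α * (n : ℝ) ^ r) *
        periodNorm s (fun t => tailSeries α r n (t + π / n) - tailSeries α r n t)) ≤
      EnC α r β (ENNReal.ofReal p) n := by
  set R := modulatedRe n (-(β * π / 2)) (tailSeries α r n) with hR
  have hRcont : Continuous R := continuous_modulatedRe_tailSeries hα hr0 n _
  have hRper : Function.Periodic R (2 * π) := modulatedRe_tailSeries_periodic α r n _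
  have hGper : Function.Periodic (fun t => R (-t)) (2 * π) := fun t => by
    simp only [neg_add, ← sub_eq_add_neg, hRper.sub_eq]
  obtain ⟨φ, hφ, hφper, hφnorm, hφmean, hφint⟩ :=
    exists_meanZero_integral_mul_eq hps (hRcont.comp continuous_neg) hGper (π / n)
  have hmem := mem_poissonClass_of_continuous (β := β) hps.pos hφ hφper hφnorm hφmean hα hr0
  have hle := le_EnC_of_forall_le (dualDeviation_nonneg α r β s n)
    (fun _ hf x => abs_sub_fourierSum_le_dualDeviation hα hr0 hr1 hps hn hf x) hmem 0
  rw [sub_fourierSum_eq_integral_modulatedRe hα hr0 hn (hφ.intervalIntegrable _ _)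
    fun x => rfl] at hle
  simp only [zero_sub, ← hR] at hle
  simp only [Function.comp_apply] at hφint
  have hreflect : periodNorm s (fun t => 1 / 2 * (R (-t) - R (-(t - π / n)))) =
      periodNorm s (fun t => 1 / 2 * (R t - R (t + π / n))) := by
    rw [← periodNorm_comp_neg fun t => 1 / 2 * (R t - R (t + π / n))]
    simp only [neg_sub, neg_add_eq_sub]
  have hhalf := periodNorm_modulatedRe_sub_le_half_diff hps.symm.lt.le
    (continuous_tailSeries hα hr0 n) hn.ne' (-(β * π / 2))
  rw [hφint, hreflect] at hle
  refine le_trans ?_ ((le_abs_self _).trans hle)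
  rw [dualDeviation, ← mul_sub, ← mul_sub]
  gcongr

end Deviation

/-! ### The asymptotic formula -/

/-- The coefficient of the main term of the asymptotic formula for the deviation. -/
noncomputable def leadingConstant (α r p s : ℝ) : ℝ :=
  cosNormR s / (π ^ ((1 : ℝ) + 1 / s) * (α * r) ^ (1 / p)) * cauchyPowerIntegral s ^ (1 / s)

/-- The factor of `γ_n` in the asymptotic formula for the deviation. -/
noncomputable def remainderScale (α r p s : ℝ) (n : ℕ) : ℝ :=
  1 / (s - 1) * (α * r) ^ ((s - 1) / p) * (n : ℝ) ^ (-((1 - r) * (s - 1))) +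
    p ^ (1 / s) * (α * r) ^ (-(1 + 1 / p)) * (n : ℝ) ^ (-r) +
    (n : ℝ) ^ (-((1 - r) / p))

section Asymptotics

variable {α r β p s : ℝ} {n : ℕ}

lemma remainderScale_pos (hα : 0 < α) (hr : 0 < r) (hps : p.HolderConjugate s) (hn : 0 < n) :
    0 < remainderScale α r p s n := by
  have hs : 0 < s - 1 := hps.symm.sub_one_pos
  have hp := hps.pos
  unfold remainderScale; positivity

lemma decayRate_rpow (hα : 0 ≤ α) (hr : 0 ≤ r) (n : ℕ) (x : ℝ) :
    decayRate α r n ^ x = (α * r) ^ x * (n : ℝ) ^ ((r - 1) * x) := by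
  rw [decayRate, mul_rpow (by positivity) (by positivity), ← rpow_mul n.cast_nonneg]

lemma decayRate_rpow_neg_one_div (hα : 0 ≤ α) (hr : 0 ≤ r) (n : ℕ) (p : ℝ) :
    decayRate α r n ^ (-(1 / p)) = (α * r) ^ (-(1 / p)) * (n : ℝ) ^ ((1 - r) / p) := by
  rw [decayRate_rpow hα hr, show (r - 1) * -(1 / p) = (1 - r) / p by ring]

lemma rpow_mul_leadingConstant (hα : 0 < α) (hr : 0 < r) (p s : ℝ) (n : ℕ) :
    (n : ℝ) ^ ((1 - r) / p) * leadingConstant α r p s =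
      1 / π * (cosMean s *
        (decayRate α r n ^ (-(1 / p)) * (2 * cauchyPowerIntegral s) ^ (1 / s))) := by
  rw [decayRate_rpow_neg_one_div hα.le hr.le, leadingConstant, cosMean,
    mul_rpow zero_le_two pi_pos.le, mul_rpow zero_le_two (cauchyPowerIntegral_nonneg s),
    rpow_add pi_pos, rpow_one, rpow_neg (by positivity)]
  field_simp

lemma rpow_mul_remainderScale (hα : 0 < α) (hr : 0 < r) (hps : p.HolderConjugate s)
    (hn : 0 < n) :
    (n : ℝ) ^ ((1 - r) / p) * remainderScale α r p s n =
      1 / (s - 1) * decayRate α r n ^ ((s - 1) / p) +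
        linearizationError α r n * (decayRate α r n ^ (-(1 / p)) * p ^ (1 / s)) + 1 := by
  have hαr : 0 < α * r := by positivity
  have hnR : (0 : ℝ) < n := by exact_mod_cast hn
  have hexponent : (s - 1) / p = s - 1 - 1 / p := by
    have := hps.symm.sub_one_mul_conj
    have := hps.ne_zero
    field_simp
    linarith
  have hfirst : (n : ℝ) ^ ((1 - r) / p) * (n : ℝ) ^ (-((1 - r) * (s - 1))) =
      (n : ℝ) ^ ((r - 1) * ((s - 1) / p)) := by
    rw [← rpow_add hnR, hexponent]; ring_nf
  have hlast : (n : ℝ) ^ ((1 - r) / p) * (n : ℝ) ^ (-((1 - r) / p)) = 1 := by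
    rw [← rpow_add hnR, add_neg_cancel, rpow_zero]
  have hαrpow : (α * r) ^ (-(1 + 1 / p)) = (α * r)⁻¹ * (α * r) ^ (-(1 / p)) := by
    rw [neg_add, rpow_add hαr, rpow_neg_one]
  have herror : linearizationError α r n = (α * r)⁻¹ * (n : ℝ) ^ (-r) := by
    rw [linearizationError, decayRate_mul_self hnR.ne', rpow_neg hnR.le, one_div, mul_inv]
  rw [decayRate_rpow_neg_one_div hα.le hr.le, decayRate_rpow hα.le hr.le, herror, ← hfirst,
    remainderScale, hαrpow]
  linear_combination hlast

lemma abs_EnC_sub_dualDeviation_le (hα : 0 < α) (hr0 : 0 < r) (hr1 : r ≤ 1)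
    (hps : p.HolderConjugate s) (hn : 0 < n) (hl : decayRate α r n ≤ 1 / 100)
    (hN : 8 ≤ decayRate α r n * n) :
    |EnC α r β (ENNReal.ofReal p) n - dualDeviation α r β s n| ≤
      1 / π * (exp (-α * (n : ℝ) ^ r) *
        (340 * linearizationError α r n * periodNorm s (cauchyKernel (decayRate α r n)))) := by
  have hupper := EnC_le_dualDeviation (β := β) hα hr0 hr1 hps hn
  have hlower := dualDeviation_sub_le_EnC (β := β) hα hr0 hr1 hps hn
  have hshift : 1 / π * (exp (-α * (n : ℝ) ^ r) *
      periodNorm s (fun t => tailSeries α r n (t + π / n) - tailSeries α r n t)) ≤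
      1 / π * (exp (-α * (n : ℝ) ^ r) *
        (340 * linearizationError α r n * periodNorm s (cauchyKernel (decayRate α r n)))) := by
    gcongr
    exact periodNorm_tailSeries_add_sub_le hps.symm.lt.le hα hr0 hr1 hn hl hN
      (abs_of_nonneg (by positivity)).le
  rw [abs_sub_comm, abs_of_nonneg (sub_nonneg.2 hupper)]
  linarith

lemma abs_dualDeviation_sub_le (hs : 1 ≤ s) (hα : 0 < α) (hr0 : 0 < r) (hr1 : r ≤ 1)
    (hn : 0 < n) (hl : decayRate α r n ≤ 1 / 100) (hN : 8 ≤ decayRate α r n * n) :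
    |dualDeviation α r β s n - 1 / π * (exp (-α * (n : ℝ) ^ r) *
        (cosMean s * periodNorm s (cauchyKernel (decayRate α r n))))| ≤
      1 / π * (exp (-α * (n : ℝ) ^ r) *
        (500 * linearizationError α r n * periodNorm s (cauchyKernel (decayRate α r n)) + 95)) := by
  rw [dualDeviation, ← mul_sub, ← mul_sub, abs_mul, abs_mul, abs_exp,
    abs_of_pos (one_div_pos.2 pi_pos)]
  gcongr
  exact abs_periodNorm_modulatedRe_tailSeries_sub_le hs hα hr0 hr1 hn hl hN _

lemma abs_cosMean_mul_periodNorm_cauchyKernel_sub_le (hps : p.HolderConjugate s) {l : ℝ}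
    (hl : 0 < l) :
    |cosMean s * periodNorm s (cauchyKernel l) -
        cosMean s * (l ^ (-(1 / p)) * (2 * cauchyPowerIntegral s) ^ (1 / s))| ≤
      2 * (1 / (s - 1) * l ^ ((s - 1) / p)) + 1 := by
  rw [← mul_sub, abs_mul, abs_of_nonneg (cosMean_nonneg s)]
  exact (mul_le_of_le_one_left (abs_nonneg _) (cosMean_le_one hps.symm.pos)).trans
    (abs_periodNorm_cauchyKernel_sub_scaled_le hps hl)

lemma abs_EnC_sub_scaled_le (hα : 0 < α) (hr0 : 0 < r) (hr1 : r ≤ 1)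
    (hps : p.HolderConjugate s) (hn : 0 < n) (hl : decayRate α r n ≤ 1 / 100)
    (hN : 8 ≤ decayRate α r n * n) :
    |EnC α r β (ENNReal.ofReal p) n - 1 / π * (exp (-α * (n : ℝ) ^ r) *
        (cosMean s * (decayRate α r n ^ (-(1 / p)) * (2 * cauchyPowerIntegral s) ^ (1 / s))))| ≤
      1 / π * (exp (-α * (n : ℝ) ^ r) *
        (840 * (linearizationError α r n * periodNorm s (cauchyKernel (decayRate α r n))) +
          2 * (1 / (s - 1) * decayRate α r n ^ ((s - 1) / p)) + 96)) := by
  set X := exp (-α * (n : ℝ) ^ r)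
  set W := periodNorm s (cauchyKernel (decayRate α r n))
  set M := decayRate α r n ^ (-(1 / p)) * (2 * cauchyPowerIntegral s) ^ (1 / s)
  have hdual := abs_EnC_sub_dualDeviation_le (β := β) hα hr0 hr1 hps hn hl hN
  have hphase := abs_dualDeviation_sub_le (β := β) hps.symm.lt.le hα hr0 hr1 hn hl hN
  have hscale : |1 / π * (X * (cosMean s * W)) - 1 / π * (X * (cosMean s * M))| ≤
      1 / π * (X * (2 * (1 / (s - 1) * decayRate α r n ^ ((s - 1) / p)) + 1)) := by
    rw [← mul_sub, ← mul_sub, abs_mul, abs_mul, abs_exp, abs_of_pos (one_div_pos.2 pi_pos)]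
    gcongr
    exact abs_cosMean_mul_periodNorm_cauchyKernel_sub_le hps
      (decayRate_pos hα hr0 (by exact_mod_cast hn))
  have htriangle := (abs_sub_le (EnC α r β (ENNReal.ofReal p) n) (dualDeviation α r β s n)
    (1 / π * (X * (cosMean s * M)))).trans (add_le_add hdual
      ((abs_sub_le _ _ _).trans (add_le_add hphase hscale)))
  exact htriangle.trans_eq (by ring)

lemma one_div_pi_mul_le_sq_mul {A B : ℝ} (hA : 0 ≤ A) (hB : 0 ≤ B) :
    1 / π * (1680 * B + 2 * A + 96) ≤ (14 * π) ^ 2 * (A + B + 1) := by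
  have hpi := pi_gt_three
  calc 1 / π * (1680 * B + 2 * A + 96) ≤ 1 * (1680 * B + 2 * A + 96) := by
        gcongr
        rw [div_le_one pi_pos]
        linarith
    _ ≤ (14 * 3) ^ 2 * (A + B + 1) := by linarith
    _ ≤ (14 * π) ^ 2 * (A + B + 1) := by gcongr

theorem abs_EnC_sub_leadingTerm_le (hα : 0 < α) (hr0 : 0 < r) (hr1 : r ≤ 1)
    (hps : p.HolderConjugate s) (hn : 0 < n) (hl : decayRate α r n ≤ 1 / 100)
    (hN : 8 ≤ decayRate α r n * n) :
    |EnC α r β (ENNReal.ofReal p) n -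
        exp (-α * (n : ℝ) ^ r) * (n : ℝ) ^ ((1 - r) / p) * leadingConstant α r p s| ≤
      (14 * π) ^ 2 *
        (exp (-α * (n : ℝ) ^ r) * (n : ℝ) ^ ((1 - r) / p) * remainderScale α r p s n) := by
  have hl0 : 0 < decayRate α r n := decayRate_pos hα hr0 (by exact_mod_cast hn)
  have hε : 0 < linearizationError α r n :=
    linearizationError_pos hα hr0 (by exact_mod_cast hn)
  have hs1 : 0 < s - 1 := hps.symm.sub_one_pos
  have hp0 := hps.pos
  have hnorm := mul_le_mul_of_nonneg_left (periodNorm_cauchyKernel_le hps hl0) hε.le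
  set A := 1 / (s - 1) * decayRate α r n ^ ((s - 1) / p)
  set B := linearizationError α r n * (decayRate α r n ^ (-(1 / p)) * p ^ (1 / s)) with hB
  set X := exp (-α * (n : ℝ) ^ r)
  have hnorm' : linearizationError α r n * periodNorm s (cauchyKernel (decayRate α r n)) ≤
      2 * B := hnorm.trans_eq (by rw [hB]; ring)
  rw [mul_assoc X, mul_assoc X, rpow_mul_leadingConstant hα hr0,
    rpow_mul_remainderScale hα hr0 hps hn, mul_left_comm X]
  refine (abs_EnC_sub_scaled_le hα hr0 hr1 hps hn hl hN).trans ?_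
  calc _ ≤ 1 / π * (X * (1680 * B + 2 * A + 96)) :=
        mul_le_mul_of_nonneg_left (mul_le_mul_of_nonneg_left (by linarith only [hnorm'])
          (exp_pos _).le) (by positivity)
    _ = X * (1 / π * (1680 * B + 2 * A + 96)) := mul_left_comm _ _ _
    _ ≤ X * ((14 * π) ^ 2 * (A + B + 1)) :=
        mul_le_mul_of_nonneg_left (one_div_pi_mul_le_sq_mul (by positivity) (by positivity))
          (exp_pos _).le
    _ = (14 * π) ^ 2 * (X * (A + B + 1)) := mul_left_comm _ _ _

end Asymptotics

/-! ### The threshold `n₀` -/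

section Threshold

variable {α r p : ℝ}

lemma n₀fin_spec (hr0 : 0 < r) (hr1 : r < 1) (hp : 1 < p) (α : ℝ) :
    0 < n₀fin α r p ∧ 1 / (α * r) * (n₀fin α r p : ℝ) ^ (-r) +
      α * r * p * (n₀fin α r p : ℝ) ^ (-(1 - r)) ≤ 1 / (3 * π) ^ 3 * (p - 1) / p := by
  have hbound : 0 < 1 / (3 * π) ^ 3 * (p - 1) / p := by
    have : 0 < p - 1 := sub_pos.2 hp
    positivity
  have hfirst := ((tendsto_rpow_neg_atTop hr0).comp
    tendsto_natCast_atTop_atTop).const_mul (1 / (α * r))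
  have hsecond := ((tendsto_rpow_neg_atTop (sub_pos.2 hr1)).comp
    tendsto_natCast_atTop_atTop).const_mul (α * r * p)
  have hlim := hfirst.add hsecond
  rw [mul_zero, mul_zero, add_zero] at hlim
  obtain ⟨m, hle, hm⟩ := ((hlim.eventually_le_const hbound).and (eventually_gt_atTop 0)).exists
  exact Nat.sInf_mem (s := {n : ℕ | 0 < n ∧ 1 / (α * r) * (n : ℝ) ^ (-r) +
    α * r * p * (n : ℝ) ^ (-(1 - r)) ≤ 1 / (3 * π) ^ 3 * (p - 1) / p}) ⟨m, hm, hle⟩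

lemma one_div_three_pi_cube_mul_le (hp : 1 < p) : 1 / (3 * π) ^ 3 * (p - 1) / p ≤ 1 / 729 := by
  rw [mul_div_assoc]
  calc 1 / (3 * π) ^ 3 * ((p - 1) / p) ≤ 1 / (3 * 3) ^ 3 * 1 := by
        gcongr
        · exact pi_gt_three.le
        · rw [div_le_one (by linarith)]
          linarith
    _ = 1 / 729 := by norm_num

lemma linearizationError_add_decayRate_mul_le {n : ℕ} (hr0 : 0 < r) (hr1 : r < 1) (hα : 0 < α)
    (hp : 1 < p) (hn : n₀fin α r p ≤ n) :
    linearizationError α r n + decayRate α r n * p ≤ 1 / 729 := by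
  obtain ⟨hpos, hle⟩ := n₀fin_spec hr0 hr1 hp α
  have hn0 : (0 : ℝ) < n₀fin α r p := by exact_mod_cast hpos
  have hnR : (0 : ℝ) < n := by exact_mod_cast hpos.trans_le hn
  have : 0 < p := by linarith
  have hmono : ∀ {e : ℝ}, 0 ≤ e → (n : ℝ) ^ (-e) ≤ (n₀fin α r p : ℝ) ^ (-e) := fun he =>
    rpow_le_rpow_of_nonpos hn0 (by exact_mod_cast hn) (by linarith)
  calc linearizationError α r n + decayRate α r n * p
      = 1 / (α * r) * (n : ℝ) ^ (-r) + α * r * p * (n : ℝ) ^ (-(1 - r)) := by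
        rw [linearizationError, decayRate_mul_self hnR.ne', decayRate, neg_sub, rpow_neg hnR.le]
        field_simp
    _ ≤ 1 / (α * r) * (n₀fin α r p : ℝ) ^ (-r) +
          α * r * p * (n₀fin α r p : ℝ) ^ (-(1 - r)) :=
        add_le_add (mul_le_mul_of_nonneg_left (hmono hr0.le) (by positivity))
          (mul_le_mul_of_nonneg_left (hmono (sub_pos.2 hr1).le) (by positivity))
    _ ≤ 1 / 729 := hle.trans (one_div_three_pi_cube_mul_le hp)

lemma decayRate_le_and_le_decayRate_mul {n : ℕ} (hr0 : 0 < r) (hr1 : r < 1) (hα : 0 < α)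
    (hp : 1 < p) (hn : n₀fin α r p ≤ n) :
    decayRate α r n ≤ 1 / 100 ∧ 8 ≤ decayRate α r n * n := by
  have hnR : (0 : ℝ) < n := by exact_mod_cast (n₀fin_spec hr0 hr1 hp α).1.trans_le hn
  have hl := decayRate_pos hα hr0 hnR
  have hε := linearizationError_pos hα hr0 hnR
  have hsum := linearizationError_add_decayRate_mul_le hr0 hr1 hα hp hn
  have hlp : decayRate α r n ≤ decayRate α r n * p := le_mul_of_one_le_right hl.le hp.le
  refine ⟨by linarith, ?_⟩
  rw [← one_div_one_div (decayRate α r n * n), ← linearizationError, le_div_iff₀ hε]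
  linarith

end Threshold

theorem statement1_general (α r β p p' : ℝ)
    (hr0 : 0 < r) (hr1 : r ≤ 1) (hα : 0 < α) (hp : 1 < p)
    (hpp' : 1 / p + 1 / p' = 1) (n : ℕ)
    (hslow : α * r * (n : ℝ) ^ (r - 1) ≤ 1 / 100) (hlarge : 8 ≤ α * r * (n : ℝ) ^ r) :
    ∃ γ : ℝ, |γ| ≤ (14 * π) ^ 2 ∧
      EnC α r β (ENNReal.ofReal p) n =
        Real.exp (-α * (n : ℝ) ^ r) * (n : ℝ) ^ ((1 - r) / p) *
          (cosNormR p' / (π ^ ((1 : ℝ) + 1 / p') * (α * r) ^ (1 / p)) *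
              (∫ t in Set.Ioi (0 : ℝ), ((t ^ 2 + 1) ^ (p' / 2))⁻¹) ^ (1 / p') +
            γ * (1 / (p' - 1) * (α * r) ^ ((p' - 1) / p) * (n : ℝ) ^ (-((1 - r) * (p' - 1))) +
                p ^ (1 / p') * (α * r) ^ (-(1 + 1 / p)) * (n : ℝ) ^ (-r) +
                (n : ℝ) ^ (-((1 - r) / p)))) := by
  have hps : p.HolderConjugate p' :=
    holderConjugate_iff.2 ⟨hp, by simpa only [one_div] using hpp'⟩
  have hn : 0 < n := by
    rcases n.eq_zero_or_pos with rfl | hn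
    · norm_num [zero_rpow hr0.ne'] at hlarge
    · exact hn
  have hnR : (n : ℝ) ≠ 0 := by positivity
  have hdev := abs_EnC_sub_leadingTerm_le (β := β) hα hr0 hr1 hps hn hslow
    (by rwa [decayRate_mul_self hnR])
  set Y := exp (-α * (n : ℝ) ^ r) * (n : ℝ) ^ ((1 - r) / p)
  have hscale : 0 < Y * remainderScale α r p p' n :=
    mul_pos (by positivity) (remainderScale_pos hα hr0 hps hn)
  refine ⟨(EnC α r β (ENNReal.ofReal p) n - Y * leadingConstant α r p p') /
    (Y * remainderScale α r p p' n), ?_, ?_⟩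
  · rwa [abs_div, abs_of_pos hscale, div_le_iff₀ hscale]
  · change _ = Y * (leadingConstant α r p p' + _ * remainderScale α r p p' n)
    rw [mul_add, mul_left_comm, div_mul_cancel₀ _ hscale.ne', add_sub_cancel]

theorem statement1 (α r β p p' : ℝ)
    (hr0 : 0 < r) (hr1 : r < 1) (hα : 0 < α) (hp : 1 < p)
    (hpp' : 1 / p + 1 / p' = 1) :
    ∀ n : ℕ, n₀fin α r p ≤ n →
      ∃ γ : ℝ, |γ| ≤ (14 * π) ^ 2 ∧
        EnC α r β (ENNReal.ofReal p) n =
          Real.exp (-α * (n : ℝ) ^ r) * (n : ℝ) ^ ((1 - r) / p) *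
            (cosNormR p' / (π ^ ((1 : ℝ) + 1 / p') * (α * r) ^ (1 / p)) *
                (∫ t in Set.Ioi (0 : ℝ), ((t ^ 2 + 1) ^ (p' / 2))⁻¹) ^ (1 / p') +
              γ * (1 / (p' - 1) * (α * r) ^ ((p' - 1) / p) * (n : ℝ) ^ (-((1 - r) * (p' - 1))) +
                  p ^ (1 / p') * (α * r) ^ (-(1 + 1 / p)) * (n : ℝ) ^ (-r) +
                  (n : ℝ) ^ (-((1 - r) / p)))) := by
  intro n hn
  obtain ⟨hslow, hlarge⟩ := decayRate_le_and_le_decayRate_mul hr0 hr1 hα hp hn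
  have hnR : (0 : ℝ) < n := by exact_mod_cast (n₀fin_spec hr0 hr1 hp α).1.trans_le hn
  rw [decayRate_mul_self hnR.ne'] at hlarge
  exact statement1_general α r β p p' hr0 hr1.le hα hp hpp' n hslow hlarge
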